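/- arXiv:2407.10288 — 4 statements merged into one kernel-verified Lean document; each statement's English description precedes it below -/
import Mathlib

section
/- For every n ≥ 4 and k ≥ 1 with k ≤ n − 3, there exists a triangle-free connected graph G₀ on n vertices with exactly k cut vertices, all of whose pendant blocks are either K₂ or a cycle on at least 4 vertices, and a vertex v₀ of G₀ such that D_{G₀}(v₀) = max{ D_G(v) : G a connected graph on n vertices with exactly k cut vertices, v ∈ V(G) }. -/
/-!
Fix a connected graph `G` on `n` vertices with exactly `k` cut vertices and a vertex `v`, and sort
the vertices by their distance from `v`.  If some vertex has distance at least `j`, then every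
level `i` with `1 ≤ i < j` is nonempty, and a level consisting of one vertex is a cut vertex,
because every walk from `v` to the far vertex goes through it (`isCutVertex_of_level`).  At most
`k` of these levels are singletons, so at most `n - j - (j - 1 - k)` vertices have distance at
least `j` (`card_far_le`).  Summing over `j` bounds `D_G(v)`.

The bound is attained when the levels `1, …, k` are singletons and are followed by levels of size
two.  This is the case for the end vertex of a path attached to a cycle on `g = n - k` vertices.
For `g = 3` that cycle is a triangle, but deleting its edge opposite to the path keeps
both the number of cut vertices and the levels.  The resulting graph is `extremalGraph n g`; its
distances are bounded below by an explicit function which changes by at most one along edges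
(`le_vertexDistance`).

A block of `extremalGraph n g` with at least three vertices cannot contain a vertex having only one
neighbour inside the block (`IsBlock.no_leaf`).  Applied to the largest vertex of a block, this
confines the block to the cycle, and then maximality makes it the whole cycle.
-/

open SimpleGraph

variable {V : Type*}

/-- The distance (transmission) of a vertex `v`: the sum of distances from `v`
to all other vertices. -/
noncomputable def vertexDistance [Fintype V] (G : SimpleGraph V) (v : V) : ℕ :=
  ∑ u : V, G.dist v u

/-- The Wiener index: the sum of distances over all unordered pairs of vertices. -/
noncomputable def wienerIndex [Fintype V] (G : SimpleGraph V) : ℕ :=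
  (∑ u : V, ∑ v : V, G.dist u v) / 2

/-- `v` is a cut vertex of `G` if deleting it leaves a disconnected
(or empty) graph. -/
def IsCutVertex (G : SimpleGraph V) (v : V) : Prop :=
  ¬ (G.induce ({v}ᶜ : Set V)).Connected

/-- The number of cut vertices of `G`. -/
noncomputable def cutVertexCount (G : SimpleGraph V) : ℕ :=
  {v : V | IsCutVertex G v}.ncard

/-- `B` is (the vertex set of) a block of `G`: a maximal connected subgraph on at
least two vertices that has no cut vertex of its own. -/
def IsBlock (G : SimpleGraph V) (B : Set V) : Prop :=
  2 ≤ B.ncard ∧ (G.induce B).Connected ∧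
    (∀ v : B, ¬ IsCutVertex (G.induce B) v) ∧
    ∀ C : Set V, B ⊆ C → (G.induce C).Connected →
      (∀ v : C, ¬ IsCutVertex (G.induce C) v) → C = B

/-- A pendant block: a block containing exactly one cut vertex of `G`. -/
def IsPendantBlock (G : SimpleGraph V) (B : Set V) : Prop :=
  IsBlock G B ∧ {v ∈ B | IsCutVertex G v}.ncard = 1

/-- An s-pendant block: a pendant block which shares its cut vertex with exactly
one non-pendant block of `G`. -/
def IsSPendantBlock (G : SimpleGraph V) (B : Set V) : Prop :=
  IsPendantBlock G B ∧
    ∀ w ∈ B, IsCutVertex G w →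
      {C : Set V | IsBlock G C ∧ ¬ IsPendantBlock G C ∧ w ∈ C}.ncard = 1

/-- The graph `L_{n,g}`: a cycle `C_g` on the vertices `0, …, g-1` (consecutive
edges together with the chord `{0, g-1}`) with the path `g-1, g, …, n-1`
attached at the vertex `g-1`.  For `g < n` its unique pendant vertex is `n-1`.
For `g = n` this is the cycle `C_n`. -/
def lollipop (n g : ℕ) : SimpleGraph (Fin n) :=
  SimpleGraph.fromRel (fun i j =>
    (i : ℕ) + 1 = (j : ℕ) ∨ ((i : ℕ) = 0 ∧ (j : ℕ) = g - 1))

/-- The cycle `C_n` on `n` vertices. -/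
def cycleG (n : ℕ) : SimpleGraph (Fin n) := lollipop n n

/-- The graph `C_{m₁,m₂}ⁿ`: a cycle `C_{m₁}` on `0, …, m₁-1`, a cycle `C_{m₂}`
on `n-m₂, …, n-1`, joined by the path `m₁-1, m₁, …, n-m₂` (which degenerates to
a single identified vertex when `n = m₁+m₂-1`). -/
def dumbbell (n m₁ m₂ : ℕ) : SimpleGraph (Fin n) :=
  SimpleGraph.fromRel (fun i j =>
    (i : ℕ) + 1 = (j : ℕ) ∨ ((i : ℕ) = 0 ∧ (j : ℕ) = m₁ - 1)
      ∨ ((i : ℕ) = n - m₂ ∧ (j : ℕ) = n - 1))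

/-- Identify the vertex `w` of `H` with the vertex `u` of `G`:  the resulting
graph on `U ⊕ {x : W // x ≠ w}` whose edges are those of `G`, those of `H` not
meeting `w`, and the edges of `H` at `w` re-attached at `u`. -/
def glue {U W : Type*} (G : SimpleGraph U) (u : U) (H : SimpleGraph W) (w : W) :
    SimpleGraph (U ⊕ {x : W // x ≠ w}) :=
  SimpleGraph.fromRel (fun a b =>
    match a, b with
    | Sum.inl x, Sum.inl y => G.Adj x y
    | Sum.inl x, Sum.inr y => x = u ∧ H.Adj w y.val
    | Sum.inr x, Sum.inr y => H.Adj x.val y.val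
    | _, _ => False)

/-! ### Connectivity tools -/

/-- A graph is connected if every vertex other than the root `r` has a neighbour at which a given
`ℕ`-valued function is smaller. -/
lemma connected_of_descent {W : Type*} (H : SimpleGraph W) (r : W) (h : W → ℕ)
    (hd : ∀ x, x ≠ r → ∃ y, H.Adj x y ∧ h y < h x) : H.Connected := by
  have key : ∀ m x, h x = m → H.Reachable x r := by
    intro m
    induction m using Nat.strong_induction_on with
    | _ m ih =>
      intro x hx
      by_cases hxr : x = r
      · exact hxr ▸ Reachable.refl _
      · obtain ⟨y, hxy, hy⟩ := hd x hxr
        exact hxy.reachable.trans (ih (h y) (hx ▸ hy) y rfl)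
  have : Nonempty W := ⟨r⟩
  exact ⟨fun x y => (key _ x rfl).trans (key _ y rfl).symm⟩

lemma mem_of_connected {W : Type*} {H : SimpleGraph W} (hH : H.Connected) (P : W → Prop)
    (hP : ∀ x y, H.Adj x y → P x → P y) {a b : W} (ha : P a) : P b := by
  obtain ⟨p⟩ := hH.preconnected a b
  induction p with
  | nil => exact ha
  | cons hadj p ih => exact ih (hP _ _ hadj ha)

/-! ### Upper bound from the distance levels -/

lemma sum_eq_sum_card_le {W : Type*} [Fintype W] (f : W → ℕ) (n : ℕ) (hf : ∀ u, f u ≤ n) :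
    ∑ u, f u = ∑ j ∈ Finset.Icc 1 n, (Finset.univ.filter fun u => j ≤ f u).card := by
  simp_rw [Finset.card_filter]
  rw [Finset.sum_comm]
  refine Finset.sum_congr rfl fun u _ => ?_
  rw [← Finset.card_filter]
  have : (Finset.Icc 1 n).filter (fun j => j ≤ f u) = Finset.Icc 1 (f u) := by
    ext j
    have := hf u
    simp only [Finset.mem_filter, Finset.mem_Icc]
    omega
  simp [this]

lemma exists_dist_level {W : Type*} {G : SimpleGraph W} (hG : G.Connected) {v u : W} {i : ℕ}
    (hi : i ≤ G.dist v u) : ∃ w, G.dist v w = i := by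
  by_contra! hne
  have := mem_of_connected hG (fun x => G.dist v x < i) (b := u) (a := v) (by
    intro x y hxy hx
    have h1 := hG.dist_triangle (u := v) (v := x) (w := y)
    rw [dist_eq_one_iff_adj.2 hxy] at h1
    have := hne y
    omega) (by
      have := hne v
      simp only [dist_self] at this ⊢
      omega)
  omega

/-- A vertex that is alone at its distance `≥ 1` from `v` separates `v` from every vertex that is
farther away. -/
lemma isCutVertex_of_level {W : Type*} {G : SimpleGraph W} (hG : G.Connected) {v u w : W}
    (hw : 1 ≤ G.dist v w) (hu : G.dist v w < G.dist v u)
    (huniq : ∀ x, G.dist v x = G.dist v w → x = w) : IsCutVertex G w := by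
  intro hc
  have hvw : v ≠ w := by rintro rfl; simp at hw
  have huw : u ≠ w := by rintro rfl; omega
  have := mem_of_connected hc (fun x => G.dist v x.1 < G.dist v w)
    (a := ⟨v, hvw⟩) (b := ⟨u, huw⟩) (by
      rintro ⟨x, hx⟩ ⟨y, hy⟩ hxy hlt
      have h0 : G.Adj x y := hxy
      have h1 := hG.dist_triangle (u := v) (v := x) (w := y)
      rw [dist_eq_one_iff_adj.2 h0] at h1
      have h2 : G.dist v y ≠ G.dist v w := fun h => hy (huniq y h)
      simp only at hlt ⊢
      omega) (by simp only [dist_self]; omega)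
  simp only at this
  omega

lemma card_far_le {n k : ℕ} {G : SimpleGraph (Fin n)} (hG : G.Connected)
    (hk : cutVertexCount G = k) (v : Fin n) {j : ℕ} (hj : 1 ≤ j) :
    (Finset.univ.filter fun u => j ≤ G.dist v u).card ≤ n - j - (j - 1 - k) := by
  classical
  rcases (Finset.univ.filter fun u => j ≤ G.dist v u).eq_empty_or_nonempty with h0 | ⟨u, hu⟩
  · rw [h0]; simp
  simp only [Finset.mem_filter, Finset.mem_univ, true_and] at hu
  set L : ℕ → Finset (Fin n) := fun i => Finset.univ.filter fun x => G.dist v x = i with hL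
  have hpos : ∀ i ∈ Finset.Ico 1 j, 1 ≤ (L i).card := by
    intro i hi
    rw [Finset.mem_Ico] at hi
    obtain ⟨w, hw⟩ := exists_dist_level hG (show i ≤ G.dist v u by omega)
    exact Finset.card_pos.2 ⟨w, by simp [hL, hw]⟩
  set S := (Finset.Ico 1 j).filter fun i => (L i).card = 1 with hS
  have hSk : S.card ≤ k := by
    set C : Finset (Fin n) := Finset.univ.filter fun x => IsCutVertex G x with hC
    have hCk : C.card = k := by
      rw [← hk, cutVertexCount, Set.ncard_eq_toFinset_card']
      congr 1
      ext x
      simp [hC]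
    have hsub : S ⊆ C.image (fun x => G.dist v x) := by
      intro i hi
      simp only [hS, Finset.mem_filter, Finset.mem_Ico] at hi
      obtain ⟨⟨h1, h2⟩, h3⟩ := hi
      obtain ⟨w, hw⟩ := Finset.card_eq_one.1 h3
      have hwi : G.dist v w = i := by
        have : w ∈ L i := by rw [hw]; simp
        simpa [hL] using this
      refine Finset.mem_image.2 ⟨w, ?_, hwi⟩
      simp only [hC, Finset.mem_filter, Finset.mem_univ, true_and]
      refine isCutVertex_of_level (v := v) (u := u) hG (by omega) (by omega) fun x hx => ?_
      have : x ∈ L i := by simp [hL, hx, hwi]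
      rw [hw] at this
      simpa using this
    calc S.card ≤ _ := Finset.card_le_card hsub
      _ ≤ C.card := Finset.card_image_le
      _ = k := hCk
  have hsum : 2 * (j - 1) ≤ ∑ i ∈ Finset.Ico 1 j, (L i).card + S.card := by
    rw [hS, Finset.card_filter, ← Finset.sum_add_distrib]
    calc 2 * (j - 1) = ∑ i ∈ Finset.Ico 1 j, 2 := by simp; ring
      _ ≤ _ := Finset.sum_le_sum fun i hi => by
        have := hpos i hi
        split_ifs <;> omega
  have hsum' : j - 1 ≤ ∑ i ∈ Finset.Ico 1 j, (L i).card := by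
    calc j - 1 = ∑ i ∈ Finset.Ico 1 j, 1 := by simp
      _ ≤ _ := Finset.sum_le_sum hpos
  have hmid : ∑ i ∈ Finset.Ico 1 j, (L i).card
      = (Finset.univ.filter fun x => G.dist v x ∈ Finset.Ico 1 j).card := by
    rw [Finset.card_eq_sum_card_fiberwise (f := fun x => G.dist v x) (t := Finset.Ico 1 j)
      (by intro x hx; simpa using hx)]
    refine Finset.sum_congr rfl fun i hi => ?_
    congr 1
    ext x
    simp only [hL, Finset.mem_filter, Finset.mem_univ, true_and]
    constructor
    · rintro rfl; exact ⟨hi, rfl⟩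
    · exact fun h => h.2
  have htot : (Finset.univ.filter fun x => G.dist v x ∈ Finset.Ico 1 j).card
      + (Finset.univ.filter fun x => j ≤ G.dist v x).card + 1 ≤ n := by
    rw [← Finset.card_union_of_disjoint]
    · have hv : v ∉ (Finset.univ.filter fun x => G.dist v x ∈ Finset.Ico 1 j)
          ∪ (Finset.univ.filter fun x => j ≤ G.dist v x) := by
        simp; omega
      rw [← Finset.card_insert_of_notMem hv]
      exact (Finset.card_le_univ _).trans_eq (Fintype.card_fin n)
    · rw [Finset.disjoint_left]
      intro x hx hx'
      simp only [Finset.mem_filter, Finset.mem_univ, true_and, Finset.mem_Ico] at hx hx'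
      omega
  omega

lemma dist_le_of_connected {n : ℕ} {G : SimpleGraph (Fin n)} (hG : G.Connected) (v u : Fin n) :
    G.dist v u ≤ n := by
  obtain ⟨p, hp, hl⟩ := hG.exists_path_of_dist v u
  have := hp.length_lt
  simp only [Fintype.card_fin] at this
  omega

lemma vertexDistance_le {n k : ℕ} {G : SimpleGraph (Fin n)} (hG : G.Connected)
    (hk : cutVertexCount G = k) (v : Fin n) :
    vertexDistance G v ≤ ∑ j ∈ Finset.Icc 1 n, (n - j - (j - 1 - k)) := by
  rw [vertexDistance, sum_eq_sum_card_le _ n (dist_le_of_connected hG v)]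
  exact Finset.sum_le_sum fun j hj => card_far_le hG hk v (Finset.mem_Icc.1 hj).1

/-! ### The extremal graph -/

/-- The lollipop `L_{n,g}` (a cycle on `0, …, g-1` with the path `g-1, …, n-1` attached), except
that for `g = 3` the edge `{0, 1}` of the triangle is omitted, which leaves the tree obtained from
a path by attaching two leaves to its end. -/
def extremalGraph (n g : ℕ) : SimpleGraph (Fin n) :=
  SimpleGraph.fromRel (fun i j =>
    ((i : ℕ) + 1 = (j : ℕ) ∧ (g = 3 → (i : ℕ) ≠ 0)) ∨ ((i : ℕ) = 0 ∧ (j : ℕ) = g - 1))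

lemma extremalGraph_adj {n g : ℕ} (hg : 3 ≤ g) {i j : Fin n} : (extremalGraph n g).Adj i j ↔
    (((i : ℕ) + 1 = j ∧ (g = 3 → (i : ℕ) ≠ 0)) ∨ ((i : ℕ) = 0 ∧ (j : ℕ) = g - 1)) ∨
    (((j : ℕ) + 1 = i ∧ (g = 3 → (j : ℕ) ≠ 0)) ∨ ((j : ℕ) = 0 ∧ (i : ℕ) = g - 1)) := by
  rw [extremalGraph, fromRel_adj, ne_eq, Fin.ext_iff]
  constructor
  · exact fun h => h.2
  · intro h
    exact ⟨by omega, h⟩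

lemma extremalGraph_cliqueFree {n g : ℕ} (hg : 3 ≤ g) : (extremalGraph n g).CliqueFree 3 := by
  intro s hs
  obtain ⟨a, b, c, hab, hac, hbc, -⟩ := is3Clique_iff.1 hs
  rw [extremalGraph_adj hg] at hab hac hbc
  omega

/-- For `g ≤ m`, the set `{0, …, m - 1}` with `i` deleted induces a connected subgraph if `i` is a
vertex of the cycle other than the attachment vertex `g - 1`, or if `i` lies off the cycle and is
either the last vertex `m - 1` of the set or not in the set at all. -/
lemma induce_connected {n g m : ℕ} (hg : 3 ≤ g) (hgm : g ≤ m) (hmn : m ≤ n) (i : ℕ)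
    (hi : i < g - 1 ∨ (m ≤ i + 1 ∧ g ≤ i)) (S : Set (Fin n))
    (hS : ∀ x : Fin n, x ∈ S ↔ (x : ℕ) < m ∧ (x : ℕ) ≠ i) :
    ((extremalGraph n g).induce S).Connected := by
  have hr : (⟨g - 1, by omega⟩ : Fin n) ∈ S := (hS _).2 ⟨by simp only; omega, by simp only; omega⟩
  -- Vertices below the deleted cycle vertex descend through `0`, so they get the larger values.
  refine connected_of_descent _ ⟨_, hr⟩
    (fun x => if (x : Fin n).1 < i ∧ i < g - 1 then n + x.1.1 + 1
      else if (x : Fin n).1 < g - 1 then g - 1 - x.1.1 else x.1.1 - (g - 1)) ?_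
  rintro ⟨x, hx⟩ hne
  have hxS := (hS x).1 hx
  have hxn := x.2
  have hne' : (x : ℕ) ≠ g - 1 := by
    intro h
    exact hne (Subtype.ext (Fin.ext h))
  suffices hy : ∃ y : ℕ, ∃ hy : y < n, (y < m ∧ y ≠ i) ∧ (extremalGraph n g).Adj x ⟨y, hy⟩ ∧
      (if y < i ∧ i < g - 1 then n + y + 1
        else if y < g - 1 then g - 1 - y else y - (g - 1)) <
      (if x.1 < i ∧ i < g - 1 then n + x.1 + 1
        else if x.1 < g - 1 then g - 1 - x.1 else x.1 - (g - 1)) by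
    obtain ⟨y, hy, h1, h2, h3⟩ := hy
    exact ⟨⟨⟨y, hy⟩, (hS _).2 h1⟩, h2, h3⟩
  by_cases h1 : x.1 < g - 1
  · by_cases h2 : x.1 < i ∧ i < g - 1
    · by_cases h3 : x.1 = 0
      · refine ⟨g - 1, by omega, by omega, ?_, ?_⟩
        · rw [extremalGraph_adj hg]; simp only [and_true]; omega
        · split_ifs <;> omega
      · refine ⟨x.1 - 1, by omega, by omega, ?_, ?_⟩
        · rw [extremalGraph_adj hg]; simp only; omega
        · split_ifs <;> omega
    · by_cases h3 : g = 3 ∧ x.1 = 0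
      · refine ⟨g - 1, by omega, by omega, ?_, ?_⟩
        · rw [extremalGraph_adj hg]; simp only [and_true]; omega
        · split_ifs <;> omega
      · refine ⟨x.1 + 1, by omega, by omega, ?_, ?_⟩
        · rw [extremalGraph_adj hg]; simp only [true_and]; omega
        · split_ifs <;> omega
  · refine ⟨x.1 - 1, by omega, by omega, ?_, ?_⟩
    · rw [extremalGraph_adj hg]; simp only; omega
    · split_ifs <;> omega

/-- For `g ≤ m` the vertices `0, …, m - 1` induce a connected subgraph. -/
lemma induce_connected' {n g m : ℕ} (hg : 3 ≤ g) (hgm : g ≤ m) (hmn : m ≤ n) (S : Set (Fin n))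
    (hS : ∀ x : Fin n, x ∈ S ↔ (x : ℕ) < m) : ((extremalGraph n g).induce S).Connected :=
  induce_connected hg hgm hmn m (Or.inr ⟨by omega, hgm⟩) S fun x => by rw [hS]; omega

lemma extremalGraph_connected {n g : ℕ} (hg : 3 ≤ g) (hgn : g ≤ n) :
    (extremalGraph n g).Connected := by
  have h := induce_connected' (n := n) hg hgn le_rfl Set.univ (by simp)
  exact (SimpleGraph.induceUnivIso (extremalGraph n g)).connected_iff.1 h

lemma isCutVertex_iff {n g : ℕ} (hg : 3 ≤ g) (hgn : g < n) (i : Fin n) :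
    IsCutVertex (extremalGraph n g) i ↔ g - 1 ≤ (i : ℕ) ∧ (i : ℕ) < n - 1 := by
  constructor
  · intro h
    by_contra hi
    refine h (induce_connected (m := n) hg hgn.le le_rfl i (by omega) _ fun x => ?_)
    simp only [Set.mem_compl_iff, Set.mem_singleton_iff, Fin.ext_iff]
    omega
  · rintro ⟨h1, h2⟩ hc
    have := mem_of_connected hc (fun x => (x.1 : ℕ) < i)
      (a := ⟨⟨0, by omega⟩, by simp [Fin.ext_iff]; omega⟩)
      (b := ⟨⟨n - 1, by omega⟩, by simp [Fin.ext_iff]; omega⟩) (by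
        rintro ⟨x, hx⟩ ⟨y, hy⟩ hxy hlt
        have h0 : (extremalGraph n g).Adj x y := hxy
        rw [extremalGraph_adj hg] at h0
        simp only [Set.mem_compl_iff, Set.mem_singleton_iff, Fin.ext_iff] at hx hy
        simp only at hlt ⊢
        omega) (by simp only; omega)
    simp only at this
    omega

lemma cutVertexCount_extremalGraph {n g : ℕ} (hg : 3 ≤ g) (hgn : g < n) :
    cutVertexCount (extremalGraph n g) = n - g := by
  have h : (Fin.val '' {v : Fin n | IsCutVertex (extremalGraph n g) v})
      = ↑(Finset.Ico (g - 1) (n - 1)) := by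
    ext x
    simp only [Set.mem_image, Set.mem_ofPred_eq, isCutVertex_iff hg hgn, Finset.coe_Ico,
      Set.mem_Ico]
    constructor
    · rintro ⟨y, hy, rfl⟩; exact hy
    · exact fun hx => ⟨⟨x, by omega⟩, hx, rfl⟩
  rw [cutVertexCount, ← Set.ncard_image_of_injective _ Fin.val_injective, h,
    Set.ncard_coe_finset, Nat.card_Ico]
  omega

/-! ### Distances in the extremal graph -/

lemma le_dist_add {W : Type*} {G : SimpleGraph W} (hG : G.Connected) (f : W → ℕ)
    (hf : ∀ x y, G.Adj x y → f y ≤ f x + 1) (v u : W) : f u ≤ f v + G.dist v u := by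
  obtain ⟨p, hp⟩ := hG.exists_walk_length_eq_dist v u
  rw [← hp]
  clear hp
  induction p with
  | nil => simp
  | cons hadj p ih =>
    have := hf _ _ hadj
    rw [Walk.length_cons]
    omega

/-- The distance of the end of the path reaches the bound of `vertexDistance_le`. -/
lemma le_vertexDistance {n g : ℕ} (hg : 3 ≤ g) (hgn : g < n) :
    ∑ j ∈ Finset.Icc 1 n, (n - j - (j - 1 - (n - g)))
      ≤ vertexDistance (extremalGraph n g) ⟨n - 1, by omega⟩ := by
  set f : Fin n → ℕ := fun x => if g - 1 ≤ (x : ℕ) then n - 1 - x else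
    n - g + min (g - 1 - x) (x + 1) with hf
  have hle : ∀ x, f x ≤ (extremalGraph n g).dist ⟨n - 1, by omega⟩ x := by
    intro x
    have := le_dist_add (extremalGraph_connected hg hgn.le) f (by
      intro x y hxy
      rw [extremalGraph_adj hg] at hxy
      simp only [hf]
      split_ifs <;> omega) ⟨n - 1, by omega⟩ x
    have h0 : f ⟨n - 1, by omega⟩ = 0 := by simp only [hf]; split_ifs <;> omega
    omega
  calc _ ≤ ∑ j ∈ Finset.Icc 1 n, (Finset.univ.filter fun u => j ≤ f u).card := by
        refine Finset.sum_le_sum fun j hj => ?_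
        rw [Finset.mem_Icc] at hj
        -- The vertices with `f`-value at least `j` form the interval `[j - 1 - (n - g), n - j)`.
        have hsub : Finset.Ico (j - 1 - (n - g)) (n - j)
            ⊆ (Finset.univ.filter fun u => j ≤ f u).image Fin.val := by
          intro x hx
          rw [Finset.mem_Ico] at hx
          refine Finset.mem_image.2 ⟨⟨x, by omega⟩, ?_, rfl⟩
          simp only [hf, Finset.mem_filter, Finset.mem_univ, true_and]
          split_ifs <;> omega
        have h1 := Finset.card_le_card hsub
        rw [Nat.card_Ico] at h1
        exact h1.trans Finset.card_image_le
    _ = ∑ u, f u := (sum_eq_sum_card_le f n fun u => by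
        simp only [hf]; split_ifs <;> omega).symm
    _ ≤ _ := Finset.sum_le_sum fun u _ => hle u

/-! ### Blocks of the extremal graph -/

lemma IsBlock.no_leaf {W : Type*} {G : SimpleGraph W} {B : Set W} (hB : IsBlock G B) {m w t : W}
    (hm : m ∈ B) (ht : t ∈ B) (htm : t ≠ m) (htw : t ≠ w) (hwm : w ≠ m)
    (hnb : ∀ x ∈ B, G.Adj m x → x = w) : False := by
  obtain ⟨-, hconn, hcut, -⟩ := hB
  by_cases hw : w ∈ B
  · have hc := not_not.1 (hcut ⟨w, hw⟩)
    have := mem_of_connected hc (fun x => x.1.1 = m)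
      (a := ⟨⟨m, hm⟩, by simpa using hwm.symm⟩)
      (b := ⟨⟨t, ht⟩, by simpa using htw⟩) (by
        rintro ⟨⟨x, hx⟩, hx'⟩ ⟨⟨y, hy⟩, hy'⟩ hxy h
        have h0 : G.Adj x y := hxy
        simp only at h
        subst h
        exact absurd (Subtype.ext (hnb y hy h0)) hy') rfl
    exact htm this
  · have := mem_of_connected hconn (fun x => x.1 = m) (a := ⟨m, hm⟩) (b := ⟨t, ht⟩) (by
      rintro ⟨x, hx⟩ ⟨y, hy⟩ hxy h
      have h0 : G.Adj x y := hxy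
      simp only at h
      subst h
      exact absurd (hnb y hy h0 ▸ hy) hw) rfl
    exact htm this

lemma exists_third {W : Type*} [Finite W] {B : Set W} (hB : 3 ≤ B.ncard) (a b : W) :
    ∃ t ∈ B, t ≠ a ∧ t ≠ b := by
  by_contra! h
  have hsub : B ⊆ {a, b} := by
    intro t ht
    by_cases hta : t = a
    · simp [hta]
    · simp [h t ht hta]
  have h1 := Set.ncard_le_ncard hsub (Set.toFinite _)
  have h2 := Set.ncard_insert_le a {b}
  rw [Set.ncard_singleton] at h2
  omega

/-- A block with at least three vertices is the cycle, and then the cycle has length at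
least `4`. -/
lemma block_eq_cycle {n g : ℕ} (hg : 3 ≤ g) (hgn : g < n) {B : Set (Fin n)}
    (hB : IsBlock (extremalGraph n g) B) (h3 : 3 ≤ B.ncard) :
    4 ≤ g ∧ B = {x : Fin n | (x : ℕ) < g} := by
  have hne : B.Nonempty := Set.nonempty_of_ncard_ne_zero (by omega)
  obtain ⟨m, hm, hmax⟩ := Set.exists_max_image B (fun x => (x : ℕ)) (Set.toFinite _) hne
  have hmg : (m : ℕ) < g := by
    by_contra hmg
    obtain ⟨t, ht, ht1, ht2⟩ := exists_third h3 m ⟨m - 1, by omega⟩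
    refine hB.no_leaf hm ht ht1 ht2 (by simp [Fin.ext_iff]; omega) fun x hx hadj => ?_
    rw [extremalGraph_adj hg] at hadj
    have := hmax x hx
    simp only [Fin.ext_iff]
    omega
  have hsub : B ⊆ {x : Fin n | (x : ℕ) < g} := fun x hx => (hmax x hx).trans_lt hmg
  have hg4 : 4 ≤ g := by
    by_contra hg4
    have hg3 : g = 3 := by omega
    -- For `g = 3` the vertices `0` and `1` are adjacent only to `2`.
    obtain ⟨a, ha, ha2, -⟩ := exists_third h3 ⟨2, by omega⟩ ⟨2, by omega⟩
    obtain ⟨t, ht, ht1, ht2⟩ := exists_third h3 a ⟨2, by omega⟩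
    refine hB.no_leaf ha ht ht1 ht2 ha2.symm fun x hx hadj => ?_
    rw [extremalGraph_adj hg] at hadj
    have h1 : (x : ℕ) < g := hsub hx
    have h2 : (a : ℕ) < g := hsub ha
    simp only [ne_eq, Fin.ext_iff] at ha2 ⊢
    omega
  refine ⟨hg4, (hB.2.2.2 _ hsub (induce_connected' hg le_rfl hgn.le _ (by simp)) ?_).symm⟩
  rintro ⟨v, hv⟩ hcut
  apply hcut
  have hv' : (v : ℕ) < g := hv
  -- Inside the cycle alone, the attachment vertex `g - 1` is not a cut vertex either.
  by_cases hvg : (v : ℕ) = g - 1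
  · refine connected_of_descent _ ⟨⟨⟨0, by omega⟩, by simp; omega⟩, by
      simp [Fin.ext_iff]; omega⟩ (fun x => (x.1.1 : ℕ)) ?_
    rintro ⟨⟨x, hx⟩, hxv⟩ hx0
    simp only [Set.mem_compl_iff, Set.mem_singleton_iff, Subtype.mk.injEq, Fin.ext_iff,
      ne_eq, Set.mem_ofPred_eq] at hx hxv hx0
    refine ⟨⟨⟨⟨x - 1, by omega⟩, by simp; omega⟩, by simp [Fin.ext_iff]; omega⟩, ?_, ?_⟩
    · change (extremalGraph n g).Adj x ⟨x - 1, _⟩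
      rw [extremalGraph_adj hg]; simp only; omega
    · simp only; omega
  · have h := induce_connected (n := n) (m := g) hg le_rfl hgn.le v (by omega)
      {x : Fin n | (x : ℕ) < g ∧ (x : ℕ) ≠ v} (by simp)
    let e : ↑({⟨v, hv⟩}ᶜ : Set {x : Fin n | (x : ℕ) < g}) ≃
        ↑{x : Fin n | (x : ℕ) < g ∧ (x : ℕ) ≠ v} :=
      { toFun := fun x => ⟨x.1.1, x.1.2, fun h => x.2 (Subtype.ext (Fin.ext h))⟩
        invFun := fun x => ⟨⟨x.1, x.2.1⟩, fun h => x.2.2 (congrArg (fun z => (z.1 : ℕ)) h)⟩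
        left_inv := fun _ => rfl
        right_inv := fun _ => rfl }
    have iso : ((extremalGraph n g).induce {x : Fin n | (x : ℕ) < g}).induce {⟨v, hv⟩}ᶜ ≃g
        (extremalGraph n g).induce {x : Fin n | (x : ℕ) < g ∧ (x : ℕ) ≠ v} := ⟨e, Iff.rfl⟩
    exact iso.connected_iff.2 h

lemma induce_cycle_iso {n g : ℕ} (hg : 4 ≤ g) (hgn : g < n) :
    Nonempty ((extremalGraph n g).induce {x : Fin n | (x : ℕ) < g} ≃g cycleG g) := by
  refine ⟨⟨⟨fun x => ⟨x.1, x.2⟩, fun x => ⟨⟨x, by omega⟩, x.2⟩, fun _ => rfl, fun _ => rfl⟩, ?_⟩⟩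
  rintro ⟨x, hx⟩ ⟨y, hy⟩
  change (cycleG g).Adj ⟨x, hx⟩ ⟨y, hy⟩ ↔ (extremalGraph n g).Adj x y
  rw [extremalGraph_adj (by omega), cycleG, lollipop, fromRel_adj]
  simp only [ne_eq, Fin.mk.injEq]
  omega

/-- There is a triangle-free connected graph `G₀` on `n` vertices with exactly
`k` cut vertices, all of whose pendant blocks are `K₂` or cycles on at least
`4` vertices, containing a vertex `v₀` whose distance attains the maximum of
`D_G(v)` over all connected graphs `G` on `n` vertices with exactly `k` cut
vertices and all vertices `v` of `G`. -/
theorem stmt7 (n k : ℕ) (hn : 4 ≤ n) (hk : 1 ≤ k) (hkn : k ≤ n - 3) :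
    ∃ (G₀ : SimpleGraph (Fin n)) (v₀ : Fin n),
      G₀.Connected ∧ cutVertexCount G₀ = k ∧ G₀.CliqueFree 3 ∧
      (∀ B : Set (Fin n), IsPendantBlock G₀ B →
        B.ncard = 2 ∨ (4 ≤ B.ncard ∧
          Nonempty ((G₀.induce B) ≃g cycleG B.ncard))) ∧
      (∀ G : SimpleGraph (Fin n), G.Connected → cutVertexCount G = k →
        ∀ v : Fin n, vertexDistance G v ≤ vertexDistance G₀ v₀) := by
  obtain ⟨g, rfl⟩ : ∃ g, k = n - g := ⟨n - k, by omega⟩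
  by_cases hgn' : n ≤ g
  · omega
  have hgn : g < n := by omega
  have hg : 3 ≤ g := by omega
  refine ⟨extremalGraph n g, ⟨n - 1, by omega⟩, extremalGraph_connected hg hgn.le,
    cutVertexCount_extremalGraph hg hgn, extremalGraph_cliqueFree hg, ?_, ?_⟩
  · intro B hB
    have h2 := hB.1.1
    by_cases h3 : B.ncard = 2
    · exact Or.inl h3
    · obtain ⟨hg4, rfl⟩ := block_eq_cycle hg hgn hB.1 (by omega)
      have hcard : {x : Fin n | (x : ℕ) < g}.ncard = g := by
        have himg : Fin.val '' {x : Fin n | (x : ℕ) < g} = ↑(Finset.range g) := by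
          ext x
          simp only [Set.mem_image, Set.mem_ofPred_eq, Finset.coe_range, Set.mem_Iio]
          constructor
          · rintro ⟨y, hy, rfl⟩; exact hy
          · exact fun hx => ⟨⟨x, by omega⟩, hx, rfl⟩
        rw [← Set.ncard_image_of_injective _ Fin.val_injective, himg, Set.ncard_coe_finset,
          Finset.card_range]
      rw [hcard]
      exact Or.inr ⟨hg4, induce_cycle_iso hg4 hgn⟩
  · exact fun G hG hk v => (vertexDistance_le hG hk v).trans (le_vertexDistance hg hgn)
end

section
/- Let H be a finite simple connected graph containing a vertex w, let m₁, m₂ ≥ 3 be integers, and set m = m₁ + m₂ − 1. Let G₁ be the graph obtained by identifying the cut vertex of C_{m₁,m₂}^m with w, let G₂ be the graph obtained by identifying the cut vertex of L_{m,m−1} with w, and let G be the graph obtained by identifying a vertex of the cycle C_m with w. Then for every vertex v of H, D_G(v) > D_{G₁}(v) and D_G(v) > D_{G₂}(v). -/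
/-!
In a graph glued from `H` and a connected graph `K` at a vertex `c` of `K`, a shortest path from a
vertex `v` of `H` to a vertex of `K` passes through the merged vertex `w`, so that
`D(v) = D_H(v) + (|K| - 1) d_H(v, w) + D_K(c)` (`vertexDistance_glue`). The three graphs to be
compared differ only in the last term, and the claim reduces to `D_K(c)` being larger for the cycle
`C_m` than for the two other graphs.

A vertex of the cycle `C_n` has distance `cycleSum n = ⌊n² / 4⌋`. The cut vertex of the two cycles
sharing a vertex has distance at most `⌊m₁² / 4⌋ + ⌊m₂² / 4⌋`, that of the cycle with a pendant edge
at most `⌊(m - 1)² / 4⌋ + 1`. Both are smaller than `⌊m² / 4⌋`. Only a lower bound is needed for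
the cycle, and it comes from a function vanishing at the base vertex and increasing by at most one
along each edge (`lipschitz_le_dist`); the upper bounds come from explicit walks.
-/

open SimpleGraph

variable {V : Type*}

/-- A function on the vertices that increases by at most one along each edge increases by at most
the distance between any two vertices of a connected graph. -/
lemma lipschitz_le_dist {V : Type*} {G : SimpleGraph V} (hG : G.Connected) (f : V → ℕ)
    (hf : ∀ a b, G.Adj a b → f b ≤ f a + 1) (a b : V) : f b ≤ f a + G.dist a b := by
  obtain ⟨p, hp⟩ := hG.exists_walk_length_eq_dist a b
  rw [← hp]
  clear hp
  induction p with
  | nil => simp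
  | cons h p ih =>
    have := hf _ _ h
    rw [Walk.length_cons]
    omega

/-- A graph homomorphism out of a connected graph does not increase distances. -/
lemma dist_hom_le {V V' : Type*} {G : SimpleGraph V} {G' : SimpleGraph V'} (hG : G.Connected)
    (φ : G →g G') (a b : V) : G'.dist (φ a) (φ b) ≤ G.dist a b := by
  obtain ⟨p, hp⟩ := hG.exists_walk_length_eq_dist a b
  rw [← hp, ← Walk.length_map φ p]
  exact dist_le _

/-! ### Distances in a glued graph -/

section Glue

variable {U W : Type*} (G : SimpleGraph U) (u : U) (K : SimpleGraph W) (c : W)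

lemma glue_adj_inl_inl (x y : U) :
    (glue G u K c).Adj (Sum.inl x) (Sum.inl y) ↔ G.Adj x y := by
  simp only [glue, fromRel_adj, ne_eq, Sum.inl.injEq]
  have := G.adj_comm x y
  have := @SimpleGraph.Adj.ne _ G x y
  tauto

lemma glue_adj_inl_inr (x : U) (y : {y : W // y ≠ c}) :
    (glue G u K c).Adj (Sum.inl x) (Sum.inr y) ↔ x = u ∧ K.Adj c y.val := by
  simp [glue, fromRel_adj]

lemma glue_adj_inr_inr (x y : {y : W // y ≠ c}) :
    (glue G u K c).Adj (Sum.inr x) (Sum.inr y) ↔ K.Adj x.val y.val := by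
  simp only [glue, fromRel_adj, ne_eq, Sum.inr.injEq, Subtype.ext_iff]
  have := K.adj_comm x.val y.val
  have := @SimpleGraph.Adj.ne _ K x.val y.val
  tauto

/-- The inclusion of the first graph into the glued graph. -/
def glueInl : G →g glue G u K c where
  toFun := Sum.inl
  map_rel' h := (glue_adj_inl_inl G u K c _ _).2 h

open Classical in
/-- The inclusion of the second graph into the glued graph; it sends the designated vertex to the
merged one. -/
noncomputable def glueInr : K →g glue G u K c where
  toFun y := if h : y = c then Sum.inl u else Sum.inr ⟨y, h⟩
  map_rel' {a b} h := by
    by_cases ha : a = c <;> by_cases hb : b = c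
    · exact absurd (ha.trans hb.symm) h.ne
    · subst ha
      simpa [hb, glue_adj_inl_inr] using h
    · subst hb
      simpa [ha, adj_comm, glue_adj_inl_inr] using h
    · simpa [ha, hb, glue_adj_inr_inr] using h

lemma glueInr_self : glueInr G u K c c = Sum.inl u := by
  simp [glueInr, DFunLike.coe]

lemma glueInr_of_ne (y : {y : W // y ≠ c}) : glueInr G u K c y.val = Sum.inr y := by
  simp [glueInr, DFunLike.coe, y.2]

variable {G u K c}

lemma glue_connected (hG : G.Connected) (hK : K.Connected) : (glue G u K c).Connected := by
  rw [connected_iff_exists_forall_reachable]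
  refine ⟨Sum.inl u, ?_⟩
  rintro (x | y)
  · exact (hG.preconnected u x).map (glueInl G u K c)
  · have := (hK.preconnected c y.val).map (glueInr G u K c)
    rwa [glueInr_self, glueInr_of_ne] at this

/-- The distances from `v` predicted for the glued graph increase by at most one along each edge. -/
lemma glue_lipschitz (hG : G.Connected) (hK : K.Connected) (v : U)
    (a b : U ⊕ {y : W // y ≠ c}) (h : (glue G u K c).Adj a b) :
    Sum.elim (fun x => G.dist v x) (fun y => G.dist v u + K.dist c y.val) b ≤
      Sum.elim (fun x => G.dist v x) (fun y => G.dist v u + K.dist c y.val) a + 1 := by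
  rcases a with x | x <;> rcases b with y | y
  · rw [glue_adj_inl_inl] at h
    have := hG.dist_triangle (u := v) (v := x) (w := y)
    rw [dist_eq_one_iff_adj.2 h] at this
    exact this
  · rw [glue_adj_inl_inr] at h
    obtain ⟨rfl, h⟩ := h
    simp [dist_eq_one_iff_adj.2 h]
  · rw [adj_comm, glue_adj_inl_inr] at h
    obtain ⟨rfl, h⟩ := h
    simp only [Sum.elim_inl, Sum.elim_inr]
    omega
  · rw [glue_adj_inr_inr] at h
    have := hK.dist_triangle (u := c) (v := x.val) (w := y.val)
    rw [dist_eq_one_iff_adj.2 h] at this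
    simp only [Sum.elim_inr]
    omega

lemma glue_dist_inl (hG : G.Connected) (hK : K.Connected) (v x : U) :
    (glue G u K c).dist (Sum.inl v) (Sum.inl x) = G.dist v x := by
  apply le_antisymm
  · exact dist_hom_le hG (glueInl G u K c) v x
  · simpa using lipschitz_le_dist (glue_connected hG hK) _
      (glue_lipschitz (u := u) (c := c) hG hK v) (Sum.inl v) (Sum.inl x)

lemma glue_dist_inr (hG : G.Connected) (hK : K.Connected) (v : U) (y : {y : W // y ≠ c}) :
    (glue G u K c).dist (Sum.inl v) (Sum.inr y) = G.dist v u + K.dist c y.val := by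
  apply le_antisymm
  · have h₁ := dist_hom_le hK (glueInr G u K c) c y.val
    rw [glueInr_self, glueInr_of_ne] at h₁
    have h₂ := (glue_connected (u := u) (c := c) hG hK).dist_triangle
      (u := Sum.inl v) (v := Sum.inl u) (w := Sum.inr y)
    rw [glue_dist_inl hG hK] at h₂
    omega
  · simpa using lipschitz_le_dist (glue_connected hG hK) _
      (glue_lipschitz (u := u) (c := c) hG hK v) (Sum.inl v) (Sum.inr y)

lemma vertexDistance_glue [Fintype U] [Fintype W] [DecidableEq W]
    (hG : G.Connected) (hK : K.Connected) (v : U) :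
    vertexDistance (glue G u K c) (Sum.inl v) =
      vertexDistance G v + (Fintype.card W - 1) * G.dist v u + vertexDistance K c := by
  have h : vertexDistance K c = ∑ y : {y : W // y ≠ c}, K.dist c y.val := by
    rw [vertexDistance, Fintype.sum_eq_add_sum_subtype_ne (fun y => K.dist c y) c, dist_self,
      zero_add]
  rw [h, vertexDistance, Fintype.sum_sum_type]
  simp only [glue_dist_inl hG hK, glue_dist_inr hG hK, Finset.sum_add_distrib, Finset.sum_const,
    Finset.card_univ, Fintype.card_subtype_compl, Fintype.card_unique, smul_eq_mul, ne_eq,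
    vertexDistance]
  simp [add_assoc]

end Glue

/-! ### The distance of a vertex of a cycle -/

/-- The sum of the distances from a vertex of the cycle of length `n`. -/
def cycleSum (n : ℕ) : ℕ := ∑ i ∈ Finset.range n, min i (n - i)

lemma cycleSum_add_two (n : ℕ) : cycleSum (n + 2) = cycleSum n + n + 1 := by
  unfold cycleSum
  rw [Finset.sum_range_succ', Finset.sum_range_succ]
  have h : ∀ i ∈ Finset.range n, min (i + 1) (n + 2 - (i + 1)) = min i (n - i) + 1 := by
    intro i hi
    rw [Finset.mem_range] at hi
    omega
  rw [Finset.sum_congr rfl h, Finset.sum_add_distrib]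
  simp

/-- Equivalently, `cycleSum n = ⌊n² / 4⌋`. -/
lemma cycleSum_bounds (n : ℕ) : 4 * cycleSum n ≤ n * n ∧ n * n ≤ 4 * cycleSum n + 1 := by
  induction n using Nat.twoStepInduction with
  | zero => simp [cycleSum]
  | one => simp [cycleSum]
  | more n ih _ =>
    rw [cycleSum_add_two]
    constructor <;> nlinarith

/-- The sum over the vertices `0, …, n - 1` of a cycle whose base vertex is `n`. -/
lemma sum_range_eq_cycleSum (n : ℕ) :
    ∑ i ∈ Finset.range n, min (n - i) (i + 1) = cycleSum (n + 1) := by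
  rw [cycleSum, Finset.sum_range_succ']
  simp only [zero_le, inf_of_le_left, add_zero]
  refine Finset.sum_congr rfl fun i _ => ?_
  omega

/-! ### Distances in the three graphs -/

section Path

variable {n : ℕ} {K : SimpleGraph (Fin n)}

/-- In a graph on `0, …, n - 1` in which consecutive numbers are adjacent, counting upwards gives a
walk. -/
lemma exists_path_walk (hK : ∀ i j : Fin n, (i : ℕ) + 1 = j → K.Adj i j) (i : Fin n) (d : ℕ)
    (j : Fin n) (h : (i : ℕ) + d = j) : ∃ p : K.Walk i j, p.length = d := by
  induction d generalizing j with
  | zero =>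
    obtain rfl : i = j := Fin.ext (by simpa using h)
    exact ⟨Walk.nil, rfl⟩
  | succ d ih =>
    obtain ⟨p, hp⟩ := ih ⟨i + d, by omega⟩ rfl
    exact ⟨p.concat (hK _ j (by simp only; omega)), by rw [Walk.length_concat, hp]⟩

lemma path_connected (hn : 0 < n) (hK : ∀ i j : Fin n, (i : ℕ) + 1 = j → K.Adj i j) :
    K.Connected := by
  rw [connected_iff_exists_forall_reachable]
  refine ⟨⟨0, hn⟩, fun j => ?_⟩
  obtain ⟨p, -⟩ := exists_path_walk hK ⟨0, hn⟩ j j (by simp)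
  exact p.reachable

lemma path_dist_le_sub (hK : ∀ i j : Fin n, (i : ℕ) + 1 = j → K.Adj i j) (i j : Fin n) :
    K.dist i j ≤ (i - j : ℕ) + (j - i : ℕ) := by
  rcases le_total (i : ℕ) j with h | h
  · obtain ⟨p, hp⟩ := exists_path_walk hK i (j - i) j (by omega)
    have := dist_le p
    omega
  · obtain ⟨p, hp⟩ := exists_path_walk hK j (i - j) i (by omega)
    have := dist_le p
    rw [dist_comm]
    omega

/-- The bound obtained by first using a chord `{c, a}` and then the path. -/
lemma chord_dist_le (hK : ∀ i j : Fin n, (i : ℕ) + 1 = j → K.Adj i j) {c a : Fin n}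
    (h : K.Adj c a) (j : Fin n) : K.dist c j ≤ 1 + ((a - j : ℕ) + (j - a : ℕ)) := by
  have h₁ := (path_connected c.pos hK).dist_triangle (u := c) (v := a) (w := j)
  rw [dist_eq_one_iff_adj.2 h] at h₁
  have := path_dist_le_sub hK a j
  omega

end Path

lemma lollipop_adj_succ (n g : ℕ) (i j : Fin n) (h : (i : ℕ) + 1 = j) :
    (lollipop n g).Adj i j := by
  simp only [lollipop, fromRel_adj, ne_eq, Fin.ext_iff]
  omega

lemma dumbbell_adj_succ (n m₁ m₂ : ℕ) (i j : Fin n) (h : (i : ℕ) + 1 = j) :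
    (dumbbell n m₁ m₂).Adj i j := by
  simp only [dumbbell, fromRel_adj, ne_eq, Fin.ext_iff]
  omega

lemma cycleSum_le_vertexDistance (m : ℕ) (hm : 0 < m) :
    cycleSum m ≤ vertexDistance (cycleG m) ⟨0, hm⟩ := by
  rw [cycleSum, vertexDistance, Finset.sum_range]
  refine Finset.sum_le_sum fun i _ => ?_
  have h := lipschitz_le_dist (path_connected hm (lollipop_adj_succ m m))
    (fun i => min (i : ℕ) (m - i)) ?_ ⟨0, hm⟩ i
  · simpa [cycleG] using h
  · intro a b hab
    simp only [lollipop, fromRel_adj, ne_eq, Fin.ext_iff] at hab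
    have := a.2
    have := b.2
    omega

lemma dumbbell_vertexDistance_le (m₁ m₂ m : ℕ) (h₁ : 3 ≤ m₁) (h₂ : 3 ≤ m₂)
    (hm : m = m₁ + m₂ - 1) (hc : m₁ - 1 < m) :
    vertexDistance (dumbbell m m₁ m₂) ⟨m₁ - 1, hc⟩ ≤ cycleSum m₁ + cycleSum m₂ := by
  obtain ⟨k, rfl⟩ : ∃ k, m₁ = k + 1 := ⟨m₁ - 1, by omega⟩
  obtain rfl : m = k + m₂ := by omega
  have hK := dumbbell_adj_succ (k + m₂) (k + 1) m₂
  have a₁ : (dumbbell (k + m₂) (k + 1) m₂).Adj ⟨k + 1 - 1, hc⟩ ⟨0, by omega⟩ := by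
    simp only [dumbbell, fromRel_adj, ne_eq, Fin.ext_iff, true_and, and_true,
      Nat.add_sub_cancel, true_or, or_true]
    omega
  have a₂ : (dumbbell (k + m₂) (k + 1) m₂).Adj ⟨k + 1 - 1, hc⟩ ⟨k + m₂ - 1, by omega⟩ := by
    simp only [dumbbell, fromRel_adj, ne_eq, Fin.ext_iff, and_true,
      Nat.add_sub_cancel, true_or, or_true]
    omega
  -- The vertices before the cut vertex form one cycle with it, those after it the other.
  have e : cycleSum (k + 1) + cycleSum m₂ = ∑ i ∈ Finset.range (k + m₂),
      if i < k then min (k - i) (i + 1) else min (i - k) (m₂ - (i - k)) := by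
    rw [Finset.sum_range_add, ← sum_range_eq_cycleSum, cycleSum]
    congr 1
    · refine Finset.sum_congr rfl fun i hi => ?_
      rw [if_pos (Finset.mem_range.1 hi)]
    · refine Finset.sum_congr rfl fun i _ => ?_
      simp
  rw [e, vertexDistance, Finset.sum_range]
  refine Finset.sum_le_sum fun i _ => ?_
  have b₀ := path_dist_le_sub hK ⟨k + 1 - 1, hc⟩ i
  have b₁ := chord_dist_le hK a₁ i
  have b₂ := chord_dist_le hK a₂ i
  have := i.2
  simp only at b₀ b₁ b₂
  split_ifs <;> omega

lemma lollipop_vertexDistance_le (m : ℕ) (h : 3 ≤ m) (hc : m - 2 < m) :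
    vertexDistance (lollipop m (m - 1)) ⟨m - 2, hc⟩ ≤ cycleSum (m - 1) + 1 := by
  obtain ⟨k, rfl⟩ : ∃ k, m = k + 2 := ⟨m - 2, by omega⟩
  have hK := lollipop_adj_succ (k + 2) (k + 2 - 1)
  have a₁ : (lollipop (k + 2) (k + 2 - 1)).Adj ⟨k + 2 - 2, hc⟩ ⟨0, by omega⟩ := by
    simp only [lollipop, fromRel_adj, ne_eq, Fin.ext_iff, true_and,
      Nat.add_sub_cancel]
    omega
  -- The last two summands are those of the cut vertex and of the pendant vertex.
  have e : cycleSum (k + 2 - 1) + 1 = ∑ i ∈ Finset.range (k + 2),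
      if i < k then min (k - i) (i + 1) else i - k := by
    rw [Finset.sum_range_succ, Finset.sum_range_succ, show k + 2 - 1 = k + 1 from rfl,
      ← sum_range_eq_cycleSum]
    have : ∀ i ∈ Finset.range k,
        (if i < k then min (k - i) (i + 1) else i - k) = min (k - i) (i + 1) :=
      fun i hi => if_pos (Finset.mem_range.1 hi)
    rw [Finset.sum_congr rfl this]
    simp
  rw [e, vertexDistance, Finset.sum_range]
  refine Finset.sum_le_sum fun i _ => ?_
  have b₀ := path_dist_le_sub hK ⟨k + 2 - 2, hc⟩ i
  have b₁ := chord_dist_le hK a₁ i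
  have := i.2
  simp only at b₀ b₁
  split_ifs <;> omega

/-- Identifying a vertex `w` of `H` with a vertex of `C_m` gives larger vertex
distances (at every vertex of `H`) than identifying `w` with the cut vertex of
`C_{m₁,m₂}^m` or of `L_{m,m-1}`, where `m = m₁ + m₂ - 1`. -/
theorem stmt8 {U : Type*} [Fintype U] (H : SimpleGraph U) (hH : H.Connected)
    (w : U) (m₁ m₂ m : ℕ) (h₁ : 3 ≤ m₁) (h₂ : 3 ≤ m₂)
    (hm : m = m₁ + m₂ - 1) (v : U) :
    vertexDistance (glue H w (dumbbell m m₁ m₂) ⟨m₁ - 1, by omega⟩)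
        (Sum.inl v) <
      vertexDistance (glue H w (cycleG m) ⟨0, by omega⟩) (Sum.inl v) ∧
    vertexDistance (glue H w (lollipop m (m - 1)) ⟨m - 2, by omega⟩)
        (Sum.inl v) <
      vertexDistance (glue H w (cycleG m) ⟨0, by omega⟩) (Sum.inl v) := by
  have hm0 : 0 < m := by omega
  rw [vertexDistance_glue hH (path_connected hm0 (dumbbell_adj_succ m m₁ m₂)),
    vertexDistance_glue (K := cycleG m) hH (path_connected hm0 (lollipop_adj_succ m m)),
    vertexDistance_glue hH (path_connected hm0 (lollipop_adj_succ m (m - 1)))]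
  have hC := cycleSum_le_vertexDistance m hm0
  have hD := dumbbell_vertexDistance_le m₁ m₂ m h₁ h₂ hm (by omega)
  have hL := lollipop_vertexDistance_le m (by omega) (by omega)
  have b := cycleSum_bounds m
  have b₁ := cycleSum_bounds m₁
  have b₂ := cycleSum_bounds m₂
  have b₃ := cycleSum_bounds (m - 1)
  have key₁ : cycleSum m₁ + cycleSum m₂ < cycleSum m := by
    obtain ⟨p, rfl⟩ := Nat.exists_eq_add_of_le h₁
    obtain ⟨q, rfl⟩ := Nat.exists_eq_add_of_le h₂
    obtain rfl : m = p + q + 5 := by omega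
    nlinarith [Nat.zero_le (p * q)]
  have key₂ : cycleSum (m - 1) + 1 < cycleSum m := by
    obtain ⟨r, rfl⟩ : ∃ r, m = r + 5 := ⟨m - 5, by omega⟩
    rw [show r + 5 - 1 = r + 4 from rfl] at b₃ ⊢
    nlinarith
  constructor <;> omega
end

section
/- Let k ≥ 1 and m₁, m₂ ≥ 3 be integers, set n = m₁ + m₂ + k − 2, and let v₀ be the pendant vertex of L_{n,n−k}. Then D_{L_{n,n−k}}(v₀) > D_{C_{m₁,m₂}^n}(v) for every vertex v of C_{m₁,m₂}^n. -/
open SimpleGraph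

variable {V : Type*}

/-!
Write `p = m₁`, `q = m₂`, `g = p + q - 2 = n - k` and `σ(m) = ⌊m²/4⌋` for the distance of a vertex
of the cycle `C_m`.

The pendant vertex of `L_{n,g}` has distance `k(k-1)/2 + gk + σ(g)`.  Only "at least" is needed
(`le_lollipop`): a function which grows by at most one along each edge and vanishes at a vertex
bounds the graph distance from that vertex below.

For the dumbbell only upper bounds are needed, and explicit walks give them.  A vertex of `C_p` at
distance `a ≤ p/2` from the attachment vertex has distance at most
`σ(p) + k(k-1)/2 + (k-1)a + (q-1)(a+k-1) + σ(q)`, and a vertex of the connecting path at distance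
`i` from `C_p` has distance at most `σ(p) + (p-1)i + k(k-1)/2 + (q-1)(k-1-i) + σ(q)`.  Compared with
the lollipop, these bounds grow no faster in `k` (as `a ≤ p - 1`), so both cases reduce to
`k = 1`, that is to `σ(p) + σ(q) + (q-1)a < g + σ(g)` (`cycSum_lt`), which is
checked by the parities of `p` and `q`.  Vertices of `C_q` are covered by reversing the labels
(`dumbbell_rev`).
-/

/-! ### Sums of distances in cycles and paths -/

/-- `cycSum m` is the distance of any vertex of the cycle `C_m`, i.e. `⌊m²/4⌋`, written as the
sum over the vertices at clockwise position `d` from the given one. -/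
def cycSum (m : ℕ) : ℕ := ∑ d ∈ Finset.range m, min d (m - d)

theorem cycSum_add_two (m : ℕ) : cycSum (m + 2) = cycSum m + m + 1 := by
  have h : ∀ e ∈ Finset.range (m + 1), min (e + 1) (m + 2 - (e + 1)) = min e (m - e) + 1 := by
    intro e he
    have := Finset.mem_range.1 he
    omega
  unfold cycSum
  rw [Finset.sum_range_succ', Finset.sum_congr rfl h, Finset.sum_add_distrib,
    Finset.sum_range_succ]
  simp
  omega

theorem cycSum_even (b : ℕ) : cycSum (2 * b) = b * b := by
  induction b with
  | zero => rfl
  | succ b ih => rw [show 2 * (b + 1) = 2 * b + 2 by ring, cycSum_add_two, ih]; ring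

theorem cycSum_odd (b : ℕ) : cycSum (2 * b + 1) = b * b + b := by
  induction b with
  | zero => rfl
  | succ b ih => rw [show 2 * (b + 1) + 1 = 2 * b + 1 + 2 by ring, cycSum_add_two, ih]; ring

/-- The case `k = 1` of the inequality, with a vertex of `C_p` at distance `a` from the
attachment vertex. -/
theorem cycSum_lt (p q a : ℕ) (hp : 3 ≤ p) (hq : 3 ≤ q) (ha : a ≤ p / 2) :
    cycSum p + cycSum q + (q - 1) * a < (p + q - 2) + cycSum (p + q - 2) := by
  have hmul : (q - 1) * a ≤ (q - 1) * (p / 2) := Nat.mul_le_mul_left _ ha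
  refine lt_of_le_of_lt (Nat.add_le_add_left hmul _) ?_
  obtain ⟨c, hc | hc⟩ := p.even_or_odd' <;> obtain ⟨b, hb | hb⟩ := q.even_or_odd'
  · obtain ⟨b, rfl⟩ : ∃ b', b = b' + 1 := ⟨b - 1, by omega⟩
    rw [show p + q - 2 = 2 * (c + b) by omega, show q - 1 = 2 * b + 1 by omega,
      show p / 2 = c by omega, hc, hb]
    simp only [cycSum_even]
    have : 2 ≤ c := by omega
    nlinarith
  · rw [show p + q - 2 = 2 * (c + b - 1) + 1 by omega, show q - 1 = 2 * b by omega,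
      show p / 2 = c by omega, hc, hb]
    obtain ⟨b, rfl⟩ : ∃ b', b = b' + 1 := ⟨b - 1, by omega⟩
    rw [show c + (b + 1) - 1 = c + b by omega]
    simp only [cycSum_even, cycSum_odd]
    have : 2 ≤ c := by omega
    nlinarith
  · obtain ⟨b, rfl⟩ : ∃ b', b = b' + 1 := ⟨b - 1, by omega⟩
    rw [show p + q - 2 = 2 * (c + b) + 1 by omega, show q - 1 = 2 * b + 1 by omega,
      show p / 2 = c by omega, hc, hb]
    simp only [cycSum_even, cycSum_odd]
    have : 1 ≤ c := by omega
    have : 1 ≤ b := by omega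
    nlinarith
  · rw [show p + q - 2 = 2 * (c + b) by omega, show q - 1 = 2 * b by omega,
      show p / 2 = c by omega, hc, hb]
    simp only [cycSum_even, cycSum_odd]
    have : 1 ≤ c := by omega
    have : 1 ≤ b := by omega
    nlinarith

/-- Re-indexing the sum of cyclic distances from `v` by clockwise position. -/
theorem sum_cyc (m v : ℕ) (hv : v < m) :
    ∑ u ∈ Finset.range m, min (max u v - min u v) (m - (max u v - min u v)) = cycSum m := by
  obtain ⟨w, rfl⟩ := Nat.exists_eq_add_of_le hv.le
  unfold cycSum
  rw [Finset.sum_range_add, Nat.add_comm v w, Finset.sum_range_add, Nat.add_comm]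
  congr 1
  · refine Finset.sum_congr rfl fun x hx => ?_
    have := Finset.mem_range.1 hx
    congr 1 <;> omega
  · refine Finset.sum_congr rfl fun x hx => ?_
    have := Finset.mem_range.1 hx
    omega

/-- The sum seen from the attachment vertex `A` of the cycle on `0, …, A`, whose other vertex `j`
is at distance `min (j + 1) (A - j)`. -/
theorem cycSum_succ (A : ℕ) :
    cycSum (A + 1) = ∑ j ∈ Finset.range A, min (j + 1) (A - j) := by
  unfold cycSum
  rw [Finset.sum_range_succ']
  simp

/-- A vertex of a path has distance at most that of an end vertex. -/
theorem sum_path (k i : ℕ) (hi : i < k) :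
    ∑ j ∈ Finset.range k, (max j i - min j i) ≤ ∑ j ∈ Finset.range k, j := by
  obtain ⟨w, rfl⟩ := Nat.exists_eq_add_of_le hi.le
  rw [Finset.sum_range_add, Nat.add_comm i w, Finset.sum_range_add, Nat.add_comm]
  refine Nat.add_le_add (Finset.sum_le_sum fun x hx => by omega) ?_
  rw [← Finset.sum_range_reflect]
  refine Finset.sum_le_sum fun x hx => ?_
  have := Finset.mem_range.1 hx
  omega

/-! ### Distance bounds in graphs containing the path `0, 1, …, n - 1` -/

section Consecutive

variable {n : ℕ} {G : SimpleGraph (Fin n)}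

theorem exists_walk_of_le (hG : ∀ i j : Fin n, (i : ℕ) + 1 = j → G.Adj i j) (d : ℕ) :
    ∀ i j : Fin n, (i : ℕ) + d = j → ∃ p : G.Walk i j, p.length = d := by
  induction d with
  | zero =>
    intro i j h
    obtain rfl : i = j := Fin.ext h
    exact ⟨.nil, rfl⟩
  | succ d ih =>
    intro i j h
    obtain ⟨p, hp⟩ := ih ⟨i + 1, by omega⟩ j (by simp; omega)
    exact ⟨.cons (hG i ⟨i + 1, by omega⟩ rfl) p, by simp [hp]⟩

theorem connected_of_consecutive (hG : ∀ i j : Fin n, (i : ℕ) + 1 = j → G.Adj i j)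
    (i j : Fin n) : G.Reachable i j := by
  rcases le_total (i : ℕ) j with h | h
  · obtain ⟨p, -⟩ := exists_walk_of_le hG (j - i) i j (by omega)
    exact ⟨p⟩
  · obtain ⟨p, -⟩ := exists_walk_of_le hG (i - j) j i (by omega)
    exact ⟨p.reverse⟩

theorem dist_le_of_consecutive (hG : ∀ i j : Fin n, (i : ℕ) + 1 = j → G.Adj i j)
    (i j : Fin n) : G.dist i j ≤ max (i : ℕ) j - min (i : ℕ) j := by
  rcases le_total (i : ℕ) j with h | h
  · obtain ⟨p, hp⟩ := exists_walk_of_le hG (j - i) i j (by omega)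
    have := dist_le p
    omega
  · obtain ⟨p, hp⟩ := exists_walk_of_le hG (i - j) j i (by omega)
    have := dist_le p
    rw [dist_comm]
    omega

/-- Going through an edge `xy`. -/
theorem dist_le_via (hG : ∀ i j : Fin n, (i : ℕ) + 1 = j → G.Adj i j) {x y : Fin n}
    (hxy : G.Adj x y) (i j : Fin n) :
    G.dist i j ≤ (max (i : ℕ) x - min (i : ℕ) x) + 1 + (max (y : ℕ) j - min (y : ℕ) j) := by
  have hc : G.Connected :=
    { preconnected := connected_of_consecutive hG, nonempty := ⟨i⟩ }
  have h1 := hc.dist_triangle (u := i) (v := x) (w := j)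
  have h2 := hc.dist_triangle (u := x) (v := y) (w := j)
  have h3 := dist_le_of_consecutive hG i x
  have h4 := dist_le_of_consecutive hG y j
  have h5 := dist_eq_one_iff_adj.2 hxy
  omega

end Consecutive

/-- A function that grows by at most one along every edge is at most the distance from a
vertex where it vanishes. -/
theorem le_dist_of_lipschitz {W : Type*} {G : SimpleGraph W} (f : W → ℕ)
    (hf : ∀ x y, G.Adj x y → f y ≤ f x + 1) {x y : W} (hr : G.Reachable x y) (hx : f x = 0) :
    f y ≤ G.dist x y := by
  have key : ∀ {a b : W} (p : G.Walk a b), f b ≤ f a + p.length := by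
    intro a b p
    induction p with
    | nil => simp
    | cons h p ih =>
      have := hf _ _ h
      simp only [Walk.length_cons]
      omega
  obtain ⟨p, hp⟩ := hr.exists_walk_length_eq_dist
  have := key p
  omega

/-! ### The lollipop -/

theorem le_lollipop (g k : ℕ) (hk : 1 ≤ k) (hg : 3 ≤ g) :
    ∑ j ∈ Finset.range k, j + g * k + cycSum g ≤
      vertexDistance (lollipop (g + k) g) ⟨g + k - 1, by omega⟩ := by
  -- The true distance from the pendant vertex; only its Lipschitz property is needed.
  let f : ℕ → ℕ := fun u => if u < g then k + min (u + 1) (g - 1 - u) else g + k - 1 - u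
  have hsum : ∑ j ∈ Finset.range k, j + g * k + cycSum g = ∑ u : Fin (g + k), f u := by
    rw [Fin.sum_univ_eq_sum_range f, Finset.sum_range_add]
    have e1 : ∑ x ∈ Finset.range g, f x = g * k + cycSum g := by
      obtain ⟨A, rfl⟩ : ∃ A, g = A + 1 := ⟨g - 1, by omega⟩
      have : ∀ x ∈ Finset.range (A + 1), f x = k + min (x + 1) (A - x) := by
        intro x hx
        simp only [f, if_pos (Finset.mem_range.1 hx)]
        rfl
      rw [Finset.sum_congr rfl this, Finset.sum_add_distrib, cycSum_succ,
        Finset.sum_range_succ (fun x => min (x + 1) (A - x))]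
      simp
    have e2 : ∑ x ∈ Finset.range k, f (g + x) = ∑ j ∈ Finset.range k, j := by
      rw [← Finset.sum_range_reflect (fun j => j)]
      refine Finset.sum_congr rfl fun x hx => ?_
      have := Finset.mem_range.1 hx
      simp only [f]
      split_ifs <;> omega
    rw [e1, e2]
    ring
  rw [hsum]
  refine Finset.sum_le_sum fun u _ => ?_
  refine le_dist_of_lipschitz (fun u : Fin (g + k) => f u) ?_
    (connected_of_consecutive ?_ _ _) ?_
  · intro x y h
    simp only [lollipop, fromRel_adj] at h
    have := h.2
    simp only [f]
    split_ifs <;> omega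
  · intro i j h
    simp only [lollipop, fromRel_adj]
    refine ⟨fun e => ?_, Or.inl (Or.inl h)⟩
    subst e
    omega
  · simp only [f]
    split_ifs <;> omega

/-! ### The dumbbell -/

section Dumbbell

variable {p q : ℕ}

theorem dumbbell_consecutive (n p q : ℕ) (i j : Fin n) (h : (i : ℕ) + 1 = j) :
    (dumbbell n p q).Adj i j := by
  simp only [dumbbell, fromRel_adj]
  refine ⟨fun e => ?_, Or.inl (Or.inl h)⟩
  subst e
  omega

/-- The lengths of the walks along the labels using no chord, the chord of `C_p` in either
direction, or the chord of `C_q` towards its end vertex `n - 1`. -/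
theorem dumbbell_dist_le {n : ℕ} (hp : 3 ≤ p) (hq : 3 ≤ q) (hpn : p ≤ n) (hqn : q ≤ n)
    (i j : Fin n) :
    (dumbbell n p q).dist i j ≤ max (i : ℕ) j - min (i : ℕ) j ∧
    (dumbbell n p q).dist i j ≤ i + 1 + (max (p - 1) (j : ℕ) - min (p - 1) j) ∧
    (dumbbell n p q).dist i j ≤ (max (i : ℕ) (p - 1) - min (i : ℕ) (p - 1)) + 1 + j ∧
    (dumbbell n p q).dist i j ≤ (max (i : ℕ) (n - q) - min (i : ℕ) (n - q)) + 1 + (n - 1 - j) := by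
  have hG := dumbbell_consecutive n p q
  have c1 : (dumbbell n p q).Adj ⟨0, by omega⟩ ⟨p - 1, by omega⟩ := by
    simp only [dumbbell, fromRel_adj, ne_eq, Fin.mk.injEq]
    exact ⟨by omega, by simp⟩
  have c2 : (dumbbell n p q).Adj ⟨n - q, by omega⟩ ⟨n - 1, by omega⟩ := by
    simp only [dumbbell, fromRel_adj, ne_eq, Fin.mk.injEq]
    exact ⟨by omega, by simp⟩
  have t0 := dist_le_of_consecutive hG i j
  have t1 := dist_le_via hG c1 i j
  have t2 := dist_le_via hG c1.symm i j
  have t3 := dist_le_via hG c2 i j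
  simp only at t1 t2 t3
  omega

/-- A vertex of the cycle `C_p`; the witness `a` is its distance to the attachment vertex
`p - 1`. -/
theorem dumbbell_le_of_cycle (n k p q : ℕ) (hk : 1 ≤ k) (hp : 3 ≤ p) (hq : 3 ≤ q)
    (hn : n + 2 = p + q + k) (v : Fin n) (hv : (v : ℕ) < p) :
    ∃ a ≤ p / 2, vertexDistance (dumbbell n p q) v ≤
      cycSum p + ∑ j ∈ Finset.range k, j + (k - 1) * a + (q - 1) * (a + (k - 1)) + cycSum q := by
  refine ⟨min (v + 1) (p - 1 - v), by omega, ?_⟩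
  set a := min ((v : ℕ) + 1) (p - 1 - v) with ha
  let f : ℕ → ℕ := fun u =>
    if u < p then min (max u v - min u v) (p - (max u v - min u v))
    else if u < p + (k - 1) then a + (u - (p - 1))
    else a + (k - 1) + min (u - (n - q)) (n - u)
  have hle : vertexDistance (dumbbell n p q) v ≤ ∑ u : Fin n, f u := by
    refine Finset.sum_le_sum fun u _ => ?_
    obtain ⟨t0, t1, t2, t3⟩ := dumbbell_dist_le hp hq (by omega) (by omega) v u
    have hc : (dumbbell n p q).Connected :=
      { preconnected := connected_of_consecutive (dumbbell_consecutive n p q), nonempty := ⟨v⟩ }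
    -- A shortest path to `C_q` may use both chords; it is cut at the vertex `p - 1`.
    have h4 := hc.dist_triangle (u := v) (v := ⟨p - 1, by omega⟩) (w := u)
    obtain ⟨s0, s1, s2, s3⟩ := dumbbell_dist_le hp hq (by omega) (by omega) v
      (⟨p - 1, by omega⟩ : Fin n)
    obtain ⟨r0, r1, r2, r3⟩ := dumbbell_dist_le hp hq (by omega) (by omega)
      (⟨p - 1, by omega⟩ : Fin n) u
    simp only at s0 s1 s2 s3 r0 r1 r2 r3
    have := u.2
    simp only [f]
    split_ifs <;> omega
  refine hle.trans (le_of_eq ?_)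
  rw [Fin.sum_univ_eq_sum_range f, show n = p + (k - 1) + (q - 1) by omega,
    Finset.sum_range_add, Finset.sum_range_add]
  have e1 : ∑ x ∈ Finset.range p, f x = cycSum p := by
    rw [← sum_cyc p v hv]
    refine Finset.sum_congr rfl fun x hx => ?_
    simp only [f, if_pos (Finset.mem_range.1 hx)]
  have e2 : ∑ x ∈ Finset.range (k - 1), f (p + x) =
      ∑ j ∈ Finset.range k, j + (k - 1) * a := by
    obtain ⟨l, rfl⟩ : ∃ l, k = l + 1 := ⟨k - 1, by omega⟩
    have : ∀ x ∈ Finset.range (l + 1 - 1), f (p + x) = (x + 1) + a := by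
      intro x hx
      have := Finset.mem_range.1 hx
      simp only [f]
      split_ifs <;> omega
    rw [Finset.sum_congr rfl this, Finset.sum_add_distrib, Finset.sum_range_succ']
    simp
  have e3 : ∑ x ∈ Finset.range (q - 1), f (p + (k - 1) + x) =
      (q - 1) * (a + (k - 1)) + cycSum q := by
    obtain ⟨B, rfl⟩ : ∃ B, q = B + 1 := ⟨q - 1, by omega⟩
    have : ∀ x ∈ Finset.range (B + 1 - 1), f (p + (k - 1) + x) =
        (a + (k - 1)) + min (x + 1) (B - x) := by
      intro x hx
      have := Finset.mem_range.1 hx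
      simp only [f]
      split_ifs <;> omega
    rw [Finset.sum_congr rfl this, Finset.sum_add_distrib, cycSum_succ]
    simp
  rw [e1, e2, e3]
  ring

/-- A vertex of the connecting path, at distance `i` from `C_p`. -/
theorem dumbbell_le_of_path (n k p q i : ℕ) (hp : 3 ≤ p) (hq : 3 ≤ q)
    (hn : n + 2 = p + q + k) (hi : i < k) (v : Fin n) (hv : (v : ℕ) = p - 1 + i) :
    vertexDistance (dumbbell n p q) v ≤
      cycSum p + (p - 1) * i + ∑ j ∈ Finset.range k, j + (q - 1) * (k - 1 - i) + cycSum q := by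
  let f : ℕ → ℕ := fun u =>
    if u < p - 1 then i + min (u + 1) (p - 1 - u)
    else if u < p - 1 + k then max (u - (p - 1)) i - min (u - (p - 1)) i
    else (k - 1 - i) + min (u - (n - q)) (n - u)
  have hle : vertexDistance (dumbbell n p q) v ≤ ∑ u : Fin n, f u := by
    refine Finset.sum_le_sum fun u _ => ?_
    obtain ⟨t0, t1, t2, t3⟩ := dumbbell_dist_le hp hq (by omega) (by omega) v u
    have := u.2
    simp only [f]
    split_ifs <;> omega
  refine hle.trans ?_
  rw [Fin.sum_univ_eq_sum_range f, show n = p - 1 + k + (q - 1) by omega,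
    Finset.sum_range_add, Finset.sum_range_add]
  have e1 : ∑ x ∈ Finset.range (p - 1), f x = (p - 1) * i + cycSum p := by
    obtain ⟨A, rfl⟩ : ∃ A, p = A + 1 := ⟨p - 1, by omega⟩
    have : ∀ x ∈ Finset.range (A + 1 - 1), f x = i + min (x + 1) (A - x) := by
      intro x hx
      simp only [f, if_pos (Finset.mem_range.1 hx)]
      rfl
    rw [Finset.sum_congr rfl this, Finset.sum_add_distrib, cycSum_succ]
    simp
  have e2 : ∑ x ∈ Finset.range k, f (p - 1 + x) ≤ ∑ j ∈ Finset.range k, j := by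
    refine le_trans (Finset.sum_le_sum fun x hx => ?_) (sum_path k i hi)
    have := Finset.mem_range.1 hx
    simp only [f]
    split_ifs <;> omega
  have e3 : ∑ x ∈ Finset.range (q - 1), f (p - 1 + k + x) =
      (q - 1) * (k - 1 - i) + cycSum q := by
    obtain ⟨B, rfl⟩ : ∃ B, q = B + 1 := ⟨q - 1, by omega⟩
    have : ∀ x ∈ Finset.range (B + 1 - 1), f (p - 1 + k + x) =
        (k - 1 - i) + min (x + 1) (B - x) := by
      intro x hx
      have := Finset.mem_range.1 hx
      simp only [f]
      split_ifs <;> omega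
    rw [Finset.sum_congr rfl this, Finset.sum_add_distrib, cycSum_succ]
    simp
  rw [e1, e3]
  omega

/-- The bound for a vertex outside the second cycle, or equal to its attachment vertex. -/
theorem dumbbell_lt (n k p q : ℕ) (hk : 1 ≤ k) (hp : 3 ≤ p) (hq : 3 ≤ q)
    (hn : n + 2 = p + q + k) (v : Fin n) (hv : (v : ℕ) + q ≤ n) :
    vertexDistance (dumbbell n p q) v <
      ∑ j ∈ Finset.range k, j + (p + q - 2) * k + cycSum (p + q - 2) := by
  obtain ⟨l, rfl⟩ : ∃ l, k = l + 1 := ⟨k - 1, by omega⟩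
  obtain ⟨B, rfl⟩ : ∃ B, q = B + 1 := ⟨q - 1, by omega⟩
  obtain ⟨A, rfl⟩ : ∃ A, p = A + 1 := ⟨p - 1, by omega⟩
  have hsub : A + 1 + (B + 1) - 2 = A + B := by omega
  by_cases h : (v : ℕ) < A + 1
  · obtain ⟨a, ha, hD⟩ := dumbbell_le_of_cycle n (l + 1) (A + 1) (B + 1) hk hp hq hn v h
    have key := cycSum_lt (A + 1) (B + 1) a hp hq ha
    have hla : l * a ≤ l * A := Nat.mul_le_mul_left _ (by omega)
    rw [hsub] at key ⊢
    simp only [Nat.add_sub_cancel] at key hD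
    nlinarith
  · obtain ⟨i, hi⟩ : ∃ i, (v : ℕ) = A + i := ⟨v - A, by omega⟩
    have hD := dumbbell_le_of_path n (l + 1) (A + 1) (B + 1) i hp hq hn (by omega) v
      (by omega)
    have key := cycSum_lt (A + 1) (B + 1) 0 hp hq (by omega)
    have h1 : A * i ≤ A * l := Nat.mul_le_mul_left _ (by omega)
    have h2 : B * (l - i) ≤ B * l := Nat.mul_le_mul_left _ (by omega)
    rw [hsub] at key ⊢
    simp only [Nat.add_sub_cancel] at key hD
    nlinarith

end Dumbbell

/-- Reversing the labels exchanges the two cycles of the dumbbell. -/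
theorem dumbbell_rev (n p q : ℕ) (hp : 3 ≤ p) (hq : 3 ≤ q) (hpn : p ≤ n) (hqn : q ≤ n)
    (v : Fin n) :
    vertexDistance (dumbbell n p q) v = vertexDistance (dumbbell n q p) v.rev := by
  let e : dumbbell n p q ≃g dumbbell n q p :=
    { toEquiv := Fin.revPerm
      map_rel_iff' := by
        intro a b
        have := a.2
        have := b.2
        simp only [dumbbell, fromRel_adj, Fin.revPerm_apply, Fin.val_rev, ne_eq, Fin.ext_iff]
        omega }
  have hdist : ∀ u, (dumbbell n q p).dist v.rev u.rev = (dumbbell n p q).dist v u := by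
    intro u
    have hG := connected_of_consecutive (dumbbell_consecutive n p q)
    have hG' := connected_of_consecutive (dumbbell_consecutive n q p)
    apply le_antisymm
    · obtain ⟨w, hw⟩ := (hG v u).exists_walk_length_eq_dist
      have := dist_le (w.map e.toHom)
      rw [Walk.length_map, hw] at this
      exact this
    · obtain ⟨w, hw⟩ := (hG' (e v) (e u)).exists_walk_length_eq_dist
      have := dist_le (w.map e.symm.toHom)
      rw [Walk.length_map, hw] at this
      simpa [e] using this
  unfold vertexDistance
  rw [← Equiv.sum_comp Fin.revPerm (fun u => (dumbbell n q p).dist v.rev u)]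
  exact Finset.sum_congr rfl fun u _ => (hdist u).symm

/-- For `n = m₁ + m₂ + k - 2` (`k ≥ 1`, `m₁, m₂ ≥ 3`), the pendant vertex of
`L_{n,n-k}` has strictly larger distance than every vertex of `C_{m₁,m₂}^n`. -/
theorem stmt9 (n k m₁ m₂ : ℕ) (hk : 1 ≤ k) (h₁ : 3 ≤ m₁) (h₂ : 3 ≤ m₂)
    (hn : n = m₁ + m₂ + k - 2) (v : Fin n) :
    vertexDistance (dumbbell n m₁ m₂) v <
      vertexDistance (lollipop n (n - k)) ⟨n - 1, by omega⟩ := by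
  obtain ⟨g, hg⟩ : ∃ g, g = m₁ + m₂ - 2 := ⟨_, rfl⟩
  obtain rfl : n = g + k := by omega
  have hL := le_lollipop g k hk (by omega)
  simp only [Nat.add_sub_cancel]
  refine lt_of_lt_of_le ?_ hL
  by_cases hv : (v : ℕ) + m₂ ≤ g + k
  · have := dumbbell_lt _ k m₁ m₂ hk h₁ h₂ (by omega) v hv
    rwa [← hg] at this
  · rw [dumbbell_rev _ m₁ m₂ h₁ h₂ (by omega) (by omega)]
    have := dumbbell_lt _ k m₂ m₁ hk h₂ h₁ (by omega) v.rev (by rw [Fin.val_rev]; omega)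
    rwa [show m₂ + m₁ - 2 = g by omega] at this
end

section
/- Let m₁, m₂ ≥ 4 be integers and set n = m₁ + m₂ − 1. Then W(C_n) ≥ W(L_{n,n−1}) > W(C_{m₁,m₂}^n). -/
/-!
All three graphs are two cycles `C_{a+1}` and `C_{b+1}` sharing a vertex, once `C_2` is read as an
edge and `C_1` as a point: the dumbbell itself, the lollipop `L_{n,n-1}` with `b = 1`
(`lollipop_eq_dumbbell`) and the cycle `C_n` with `b = 0` (`cycleG_eq_dumbbell`).  In such a graph
the distance is the sum of the cyclic distances between the projections to the two cycles
(`dist_dumbbell`).  The transmission of a vertex of `C_k` is `⌊k²/4⌋` (`sum_cycDist`), so the sum of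
distances over ordered pairs is
`⌊(a+1)²/4⌋ (a + 1 + 2b) + ⌊(b+1)²/4⌋ (b + 1 + 2a)` (`sum_dist_dumbbell`),
and both inequalities become polynomial inequalities after splitting by parity.
-/

open SimpleGraph

variable {V : Type*}

/-- The distance between the positions `i, j < k` on the cycle `0, 1, …, k - 1`. -/
def cycDist (k i j : ℕ) : ℕ := min ((i - j) + (j - i)) (k - ((i - j) + (j - i)))

/-- The distance between `u` and `v` in two cycles of lengths `a + 1` and `b + 1` that share the
vertex `a`: `min x a` and `x - a` are the projections of `x` to the first and to the second cycle,
the latter with positions counted from the shared vertex. -/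
def twoCycDist (a b u v : ℕ) : ℕ :=
  cycDist (a + 1) (min u a) (min v a) + cycDist (b + 1) (u - a) (v - a)

/-! ### Distances -/

/-- A function satisfying the local characterization of the distance to `u` (zero exactly at `u`,
1-Lipschitz along edges, decreasing by one along some edge away from `u`) is that distance. -/
lemma dist_eq_of_local {V : Type*} (G : SimpleGraph V) (u : V) (f : V → ℕ)
    (h0 : f u = 0) (hlip : ∀ x y, G.Adj x y → f y ≤ f x + 1)
    (hdesc : ∀ x, x ≠ u → ∃ y, G.Adj y x ∧ f y + 1 = f x) (v : V) : G.dist u v = f v := by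
  have walk_le : ∀ {x y : V} (w : G.Walk x y), f y ≤ f x + w.length := by
    intro x y w
    induction w with
    | nil => simp
    | cons h p ih =>
      have := hlip _ _ h
      rw [SimpleGraph.Walk.length_cons]
      omega
  have exists_walk : ∀ (k : ℕ) (x : V), f x = k → ∃ w : G.Walk u x, w.length = k := by
    intro k
    induction k with
    | zero =>
      intro x hx
      by_cases hxu : x = u
      · subst hxu
        exact ⟨SimpleGraph.Walk.nil, rfl⟩
      · obtain ⟨y, -, hy⟩ := hdesc x hxu
        omega
    | succ k ih =>
      intro x hx
      have hxu : x ≠ u := by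
        rintro rfl
        omega
      obtain ⟨y, hadj, hy⟩ := hdesc x hxu
      obtain ⟨w, hw⟩ := ih y (by omega)
      exact ⟨w.concat hadj, by rw [SimpleGraph.Walk.length_concat, hw]⟩
  obtain ⟨w, hw⟩ := exists_walk _ v rfl
  apply le_antisymm
  · rw [← hw]
    exact SimpleGraph.dist_le w
  · obtain ⟨w', hw'⟩ := w.reachable.exists_walk_length_eq_dist
    have := walk_le w'
    omega

lemma cycDist_self (k i : ℕ) : cycDist k i i = 0 := by
  simp [cycDist]

lemma cycDist_descent (k i j : ℕ) (hi : i < k) (hj : j < k) (hij : j ≠ i) :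
    ∃ j' < k, (j + 1 = j' ∨ j' + 1 = j ∨ (j = 0 ∧ j' = k - 1) ∨ (j = k - 1 ∧ j' = 0)) ∧
      cycDist k i j' + 1 = cycDist k i j := by
  unfold cycDist
  rcases lt_or_gt_of_ne hij with h | h
  · by_cases h' : i - j ≤ k - (i - j)
    · exact ⟨j + 1, by omega, by omega, by omega⟩
    · by_cases hj0 : j = 0
      · exact ⟨k - 1, by omega, by omega, by omega⟩
      · exact ⟨j - 1, by omega, by omega, by omega⟩
  · by_cases h' : j - i ≤ k - (j - i)
    · exact ⟨j - 1, by omega, by omega, by omega⟩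
    · by_cases hj0 : j = k - 1
      · exact ⟨0, by omega, by omega, by omega⟩
      · exact ⟨j + 1, by omega, by omega, by omega⟩

lemma cycDist_lipschitz (k i x y : ℕ) (hi : i < k) (hx : x < k) (hy : y < k)
    (h : x + 1 = y ∨ y + 1 = x ∨ (x = 0 ∧ y = k - 1) ∨ (x = k - 1 ∧ y = 0)) :
    cycDist k i y ≤ cycDist k i x + 1 := by
  unfold cycDist
  rcases h with h | h | h | h <;> omega

lemma dumbbell_adj (a b : ℕ) (x y : Fin (a + b + 1)) :
    (dumbbell (a + b + 1) (a + 1) (b + 1)).Adj x y ↔ (x : ℕ) ≠ y ∧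
      (((x : ℕ) + 1 = y ∨ ((x : ℕ) = 0 ∧ (y : ℕ) = a) ∨ ((x : ℕ) = a ∧ (y : ℕ) = a + b)) ∨
       ((y : ℕ) + 1 = x ∨ ((y : ℕ) = 0 ∧ (x : ℕ) = a) ∨ ((y : ℕ) = a ∧ (x : ℕ) = a + b))) := by
  have h : a + b + 1 - (b + 1) = a := by omega
  simp only [dumbbell, SimpleGraph.fromRel_adj, h, Nat.add_sub_cancel, ne_eq, Fin.ext_iff]

theorem dist_dumbbell (a b : ℕ) (u v : Fin (a + b + 1)) :
    (dumbbell (a + b + 1) (a + 1) (b + 1)).dist u v = twoCycDist a b u v := by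
  refine dist_eq_of_local _ u (fun v => twoCycDist a b u v) ?_ ?_ ?_ v
  · simp [twoCycDist, cycDist_self]
  · intro x y h
    rw [dumbbell_adj] at h
    have hu := u.isLt
    have hx := x.isLt
    have hy := y.isLt
    -- An edge lies inside one cycle, so it leaves the projection to the other cycle unchanged.
    by_cases hxy : (x : ℕ) ≤ a ∧ (y : ℕ) ≤ a
    · have e1 : (x : ℕ) - a = 0 := by omega
      have e2 : (y : ℕ) - a = 0 := by omega
      have hl := cycDist_lipschitz (a + 1) (min (u : ℕ) a) (min (x : ℕ) a) (min (y : ℕ) a)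
        (by omega) (by omega) (by omega) (by omega)
      simp only [twoCycDist, e1, e2]
      omega
    · have e1 : min (x : ℕ) a = a := by omega
      have e2 : min (y : ℕ) a = a := by omega
      have hl := cycDist_lipschitz (b + 1) ((u : ℕ) - a) ((x : ℕ) - a) ((y : ℕ) - a)
        (by omega) (by omega) (by omega) (by omega)
      simp only [twoCycDist, e1, e2]
      omega
  · intro x hxu
    have hxu' : (x : ℕ) ≠ u := fun h => hxu (Fin.ext h)
    have hu := u.isLt
    have hx := x.isLt
    by_cases h1 : (x : ℕ) ≤ a ∧ (x : ℕ) ≠ min (u : ℕ) a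
    · obtain ⟨j, hj, hadj, hd⟩ :=
        cycDist_descent (a + 1) (min (u : ℕ) a) x (by omega) (by omega) h1.2
      have hne : j ≠ x := by
        rintro rfl
        omega
      refine ⟨⟨j, by omega⟩, ?_, ?_⟩
      · rw [dumbbell_adj]
        dsimp only
        omega
      · have e1 : min (x : ℕ) a = x := by omega
        have e2 : min j a = j := by omega
        have e3 : (x : ℕ) - a = 0 := by omega
        have e4 : j - a = 0 := by omega
        simp only [twoCycDist, e1, e2, e3, e4]
        omega
    · obtain ⟨j, hj, hadj, hd⟩ :=
        cycDist_descent (b + 1) ((u : ℕ) - a) ((x : ℕ) - a) (by omega) (by omega) (by omega)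
      have hne : j ≠ (x : ℕ) - a := by
        rintro rfl
        omega
      refine ⟨⟨a + j, by omega⟩, ?_, ?_⟩
      · rw [dumbbell_adj]
        dsimp only
        omega
      · have e1 : min (x : ℕ) a = a := by omega
        have e2 : min (a + j) a = a := by omega
        have e3 : a + j - a = j := by omega
        simp only [twoCycDist, e1, e2, e3]
        omega

/-! ### Sums of distances -/

lemma sum_cycDist_zero : ∀ k : ℕ, ∑ j ∈ Finset.range k, cycDist k 0 j = k ^ 2 / 4
  | 0 => by simp
  | 1 => by simp [cycDist]
  | k + 2 => by
    -- Apart from its two ends, the distance profile of `C_{k+2}` is that of `C_k` raised by one.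
    have h : ∀ j ∈ Finset.range k, cycDist (k + 2) 0 (j + 1) = cycDist k 0 j + 1 := by
      intro j hj
      rw [Finset.mem_range] at hj
      unfold cycDist
      omega
    have hk : cycDist (k + 2) 0 (k + 1) = 1 := by
      unfold cycDist
      omega
    have hsq : (k + 2) ^ 2 = k ^ 2 + (k + 1) * 4 := by ring
    rw [Finset.sum_range_succ', Finset.sum_range_succ, Finset.sum_congr rfl h,
      Finset.sum_add_distrib, sum_cycDist_zero k, hk, cycDist_self, hsq,
      Nat.add_mul_div_right _ _ (by norm_num)]
    simp
    omega

theorem sum_cycDist (k i : ℕ) (hi : i < k) :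
    ∑ j ∈ Finset.range k, cycDist k i j = k ^ 2 / 4 := by
  induction i with
  | zero => exact sum_cycDist_zero k
  | succ i ih =>
    rw [← ih (by omega)]
    obtain ⟨k, rfl⟩ : ∃ l, k = l + 1 := ⟨k - 1, by omega⟩
    -- Rotating by one step carries the row of `i` to the row of `i + 1`.
    rw [Finset.sum_range_succ', Finset.sum_range_succ]
    congr 1
    · refine Finset.sum_congr rfl fun j _ => ?_
      unfold cycDist
      omega
    · unfold cycDist
      omega

lemma cycDist_comm (k i j : ℕ) : cycDist k i j = cycDist k j i := by
  unfold cycDist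
  rw [add_comm]

lemma sum_cycDist_left (k j : ℕ) (hj : j < k) :
    ∑ i ∈ Finset.range k, cycDist k i j = k ^ 2 / 4 := by
  rw [← sum_cycDist k j hj]
  exact Finset.sum_congr rfl fun i _ => cycDist_comm k i j

lemma sum_proj_first (a b : ℕ) (g : ℕ → ℕ) :
    ∑ x ∈ Finset.range (a + b + 1), g (min x a) = ∑ x ∈ Finset.range (a + 1), g x + b * g a := by
  rw [show a + b + 1 = (a + 1) + b by omega, Finset.sum_range_add]
  congr 1
  · refine Finset.sum_congr rfl fun x hx => ?_
    rw [Finset.mem_range] at hx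
    rw [min_eq_left (by omega)]
  · rw [Finset.sum_congr rfl (g := fun _ => g a)]
    · simp
    · intro x _
      rw [min_eq_right (by omega)]

lemma sum_proj_second (a b : ℕ) (g : ℕ → ℕ) :
    ∑ x ∈ Finset.range (a + b + 1), g (x - a) = a * g 0 + ∑ x ∈ Finset.range (b + 1), g x := by
  rw [add_assoc, Finset.sum_range_add]
  congr 1
  · rw [Finset.sum_congr rfl (g := fun _ => g 0)]
    · simp
    · intro x hx
      rw [Finset.mem_range] at hx
      rw [Nat.sub_eq_zero_of_le (by omega)]
  · simp

theorem sum_dist_dumbbell (a b : ℕ) :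
    ∑ u : Fin (a + b + 1), ∑ v : Fin (a + b + 1),
        (dumbbell (a + b + 1) (a + 1) (b + 1)).dist u v =
      (a + 1) ^ 2 / 4 * (a + 1 + 2 * b) + (b + 1) ^ 2 / 4 * (b + 1 + 2 * a) := by
  have hrow : ∀ u : ℕ, u < a + b + 1 →
      ∑ v ∈ Finset.range (a + b + 1), twoCycDist a b u v =
        ((a + 1) ^ 2 / 4 + b * cycDist (a + 1) (min u a) a) +
        (a * cycDist (b + 1) (u - a) 0 + (b + 1) ^ 2 / 4) := by
    intro u hu
    simp only [twoCycDist, Finset.sum_add_distrib]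
    rw [sum_proj_first a b (fun x => cycDist (a + 1) (min u a) x),
      sum_proj_second a b (fun x => cycDist (b + 1) (u - a) x),
      sum_cycDist _ _ (by omega), sum_cycDist _ _ (by omega)]
  simp only [dist_dumbbell]
  rw [Fin.sum_univ_eq_sum_range (fun u => ∑ v : Fin (a + b + 1), twoCycDist a b u v)]
  rw [Finset.sum_congr rfl (g := fun u =>
        ((a + 1) ^ 2 / 4 + b * cycDist (a + 1) (min u a) a) +
        (a * cycDist (b + 1) (u - a) 0 + (b + 1) ^ 2 / 4))]
  · simp only [Finset.sum_add_distrib, ← Finset.mul_sum]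
    rw [sum_proj_first a b (fun x => cycDist (a + 1) x a),
      sum_proj_second a b (fun x => cycDist (b + 1) x 0),
      sum_cycDist_left _ _ (by omega), sum_cycDist_left _ _ (by omega)]
    simp only [cycDist_self, Finset.sum_const, Finset.card_range, smul_eq_mul]
    ring
  · intro u hu
    rw [Finset.mem_range] at hu
    rw [← hrow u hu]
    exact Fin.sum_univ_eq_sum_range (fun v => twoCycDist a b u v) _

/-! ### Comparison of the three graphs -/

lemma lollipop_eq_dumbbell (k : ℕ) :
    lollipop (k + 1 + 1) (k + 1) = dumbbell (k + 1 + 1) (k + 1) (1 + 1) := by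
  ext x y
  rw [dumbbell_adj]
  simp only [lollipop, SimpleGraph.fromRel_adj, ne_eq, Fin.ext_iff, Nat.add_sub_cancel]
  omega

lemma cycleG_eq_dumbbell (k : ℕ) :
    cycleG (k + 0 + 1) = dumbbell (k + 0 + 1) (k + 1) (0 + 1) := by
  ext x y
  rw [dumbbell_adj k 0 x y]
  simp only [cycleG, lollipop, SimpleGraph.fromRel_adj, ne_eq, Fin.ext_iff, Nat.add_sub_cancel]
  omega

lemma sq_even_div (p : ℕ) : (2 * p) ^ 2 / 4 = p * p := by
  rw [show (2 * p) ^ 2 = p * p * 4 by ring, Nat.mul_div_cancel _ (by norm_num)]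

lemma sq_odd_div (p : ℕ) : (2 * p + 1) ^ 2 / 4 = p * (p + 1) := by
  rw [show (2 * p + 1) ^ 2 = 1 + p * (p + 1) * 4 by ring, Nat.add_mul_div_right _ _ (by norm_num)]
  simp

/-- `W(L_{n,n-1}) ≤ W(C_n)` with both sides doubled, for `n = k + 1`. -/
lemma lollipop_le_cycle (k : ℕ) (hk : 6 ≤ k) :
    k ^ 2 / 4 * (k + 2) + 2 * k ≤ (k + 1) ^ 2 / 4 * (k + 1) := by
  rcases Nat.even_or_odd' k with ⟨p, rfl | rfl⟩
  · obtain ⟨q, rfl⟩ : ∃ q, p = q + 3 := ⟨p - 3, by omega⟩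
    rw [sq_even_div, sq_odd_div]
    nlinarith
  · obtain ⟨q, rfl⟩ : ∃ q, p = q + 3 := ⟨p - 3, by omega⟩
    rw [show 2 * (q + 3) + 1 + 1 = 2 * (q + 4) by ring, sq_even_div, sq_odd_div]
    nlinarith

/-- `W(C_{m₁,m₂}ⁿ) < W(L_{n,n-1})` with both sides doubled. -/
lemma dumbbell_lt_lollipop (m₁ m₂ k : ℕ) (h₁ : 4 ≤ m₁) (h₂ : 4 ≤ m₂) (hk : k + 2 = m₁ + m₂) :
    m₁ ^ 2 / 4 * (m₁ + 2 * (m₂ - 1)) + m₂ ^ 2 / 4 * (m₂ + 2 * (m₁ - 1)) + 2 ≤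
      k ^ 2 / 4 * (k + 2) + 2 * k := by
  rcases Nat.even_or_odd' m₁ with ⟨p, rfl | rfl⟩ <;>
  rcases Nat.even_or_odd' m₂ with ⟨q, rfl | rfl⟩ <;>
  obtain ⟨p, rfl⟩ : ∃ r, p = r + 2 := ⟨p - 2, by omega⟩ <;>
  obtain ⟨q, rfl⟩ : ∃ r, q = r + 2 := ⟨q - 2, by omega⟩
  · obtain rfl : k = 2 * (p + q + 3) := by omega
    rw [show 2 * (q + 2) - 1 = 2 * q + 3 by omega, show 2 * (p + 2) - 1 = 2 * p + 3 by omega]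
    simp only [sq_even_div]
    ring_nf
    nlinarith [Nat.zero_le (p * q), Nat.zero_le (p * p * q), Nat.zero_le (p * q * q)]
  · obtain rfl : k = 2 * (p + q + 3) + 1 := by omega
    rw [show 2 * (q + 2) + 1 - 1 = 2 * q + 4 by omega, show 2 * (p + 2) - 1 = 2 * p + 3 by omega]
    simp only [sq_even_div, sq_odd_div]
    ring_nf
    nlinarith [Nat.zero_le (p * q), Nat.zero_le (p * p * q), Nat.zero_le (p * q * q)]
  · obtain rfl : k = 2 * (p + q + 3) + 1 := by omega
    rw [show 2 * (q + 2) - 1 = 2 * q + 3 by omega, show 2 * (p + 2) + 1 - 1 = 2 * p + 4 by omega]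
    simp only [sq_even_div, sq_odd_div]
    ring_nf
    nlinarith [Nat.zero_le (p * q), Nat.zero_le (p * p * q), Nat.zero_le (p * q * q)]
  · obtain rfl : k = 2 * (p + q + 4) := by omega
    rw [show 2 * (q + 2) + 1 - 1 = 2 * q + 4 by omega,
      show 2 * (p + 2) + 1 - 1 = 2 * p + 4 by omega]
    simp only [sq_even_div, sq_odd_div]
    ring_nf
    nlinarith [Nat.zero_le (p * q), Nat.zero_le (p * p * q), Nat.zero_le (p * q * q)]

/-- For `m₁, m₂ ≥ 4` and `n = m₁ + m₂ - 1`: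
`W(C_n) ≥ W(L_{n,n-1}) > W(C_{m₁,m₂}^n)`. -/
theorem stmt13 (n m₁ m₂ : ℕ) (h₁ : 4 ≤ m₁) (h₂ : 4 ≤ m₂)
    (hn : n = m₁ + m₂ - 1) :
    wienerIndex (lollipop n (n - 1)) ≤ wienerIndex (cycleG n) ∧
    wienerIndex (dumbbell n m₁ m₂) < wienerIndex (lollipop n (n - 1)) := by
  obtain ⟨a, rfl⟩ : ∃ a, m₁ = a + 1 := ⟨m₁ - 1, by omega⟩
  obtain ⟨b, rfl⟩ : ∃ b, m₂ = b + 1 := ⟨m₂ - 1, by omega⟩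
  obtain rfl : n = a + b + 1 := by omega
  obtain ⟨k, hk⟩ : ∃ k, a + b = k + 1 := ⟨a + b - 1, by omega⟩
  have hD := sum_dist_dumbbell a b
  have hC := sum_dist_dumbbell (k + 1) 0
  have hL := sum_dist_dumbbell k 1
  rw [← cycleG_eq_dumbbell] at hC
  rw [← lollipop_eq_dumbbell] at hL
  have e1 := lollipop_le_cycle (k + 1) (by omega)
  have e2 := dumbbell_lt_lollipop (a + 1) (b + 1) (k + 1) h₁ h₂ (by omega)
  simp only [Nat.add_sub_cancel] at e2
  norm_num at hC hL
  unfold wienerIndex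
  rw [hD, hk, Nat.add_sub_cancel, hL, hC]
  constructor
  · apply Nat.div_le_div_right
    nlinarith
  · -- The ordered sums differ by at least two, so halving keeps the inequality strict.
    have : (a + 1) ^ 2 / 4 * (a + 1 + 2 * b) + (b + 1) ^ 2 / 4 * (b + 1 + 2 * a) + 2 ≤
        (k + 1) ^ 2 / 4 * (k + 1 + 2) + (2 + 2 * k) := by
      nlinarith
    omega
end
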